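/- Let C be a quasiminimal pregeometry class, H, H' ∈ C uncountable, let B and B' be bases of the pregeometries (H, cl_H) and (H', cl_{H'}) respectively, and let g : B → B' be a bijection. Then g extends to an isomorphism ĝ : H → H' of L-structures. -/

import Mathlib

open FirstOrder FirstOrder.Language Set Cardinal



universe u u' v w

namespace QM

variable {L : FirstOrder.Language.{v, w}}

/-- Formulas of `L_{ω₁,ω}`: built from atomic formulas by negation, countable
conjunction (indexed by `ℕ`), and universal quantification; `α` is the type of free
variables and `n` counts the de Bruijn bound variables. Countable disjunctions and
the existential quantifier are definable via negation. -/
inductive InfFormula (L : FirstOrder.Language.{v, w}) (α : Type u) : ℕ → Type (max u v w)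
  | falsum {n : ℕ} : InfFormula L α n
  | equal {n : ℕ} (t₁ t₂ : L.Term (α ⊕ (Fin n))) : InfFormula L α n
  | rel {n l : ℕ} (R : L.Relations l) (ts : Fin l → L.Term (α ⊕ (Fin n))) : InfFormula L α n
  | not {n : ℕ} (φ : InfFormula L α n) : InfFormula L α n
  | iInf {n : ℕ} (φ : ℕ → InfFormula L α n) : InfFormula L α n
  | all {n : ℕ} (φ : InfFormula L α (n + 1)) : InfFormula L α n

/-- Satisfaction of an `L_{ω₁,ω}`-formula in an `L`-structure `M`, given an
assignment `v` of the free variables and `xs` of the bound variables. -/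
def InfFormula.Realize {M : Type u'} [L.Structure M] {α : Type u} :
    ∀ {n : ℕ}, InfFormula L α n → (α → M) → (Fin n → M) → Prop
  | _, .falsum, _, _ => False
  | _, .equal t₁ t₂, v, xs => t₁.realize (Sum.elim v xs) = t₂.realize (Sum.elim v xs)
  | _, .rel R ts, v, xs => Structure.RelMap R (fun i => (ts i).realize (Sum.elim v xs))
  | _, .not φ, v, xs => ¬ φ.Realize v xs
  | _, .iInf φ, v, xs => ∀ i : ℕ, (φ i).Realize v xs
  | _, .all φ, v, xs => ∀ x : M, φ.Realize v (Fin.snoc xs x)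

/-- An `L_{ω₁,ω}`-sentence. -/
abbrev InfSentence (L : FirstOrder.Language.{v, w}) := InfFormula L PEmpty 0

/-- Satisfaction of an `L_{ω₁,ω}`-sentence. -/
def InfSentence.RealizeS (M : Type u') [L.Structure M] (φ : InfSentence L) : Prop :=
  InfFormula.Realize (M := M) φ PEmpty.elim (fun i => i.elim0)

/-- Satisfaction of an `L_{ω₁,ω}`-formula with parameters from the set `A`
and `m` free variables `v̄`, at the tuple `v`. -/
def InfFormula.RealizeP {M : Type u'} [L.Structure M] {A : Set M} {m : ℕ}
    (φ : InfFormula L (↥A ⊕ Fin m) 0) (v : Fin m → M) : Prop :=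
  φ.Realize (Sum.elim Subtype.val v) (fun i => i.elim0)

/-- The domain of a partial map, viewed as a graph (set of pairs). -/
def pdom {H : Type*} {H' : Type*} (p : Set (H × H')) : Set H := Prod.fst '' p

/-- The image of a partial map, viewed as a graph (set of pairs). -/
def pimg {H : Type*} {H' : Type*} (p : Set (H × H')) : Set H' := Prod.snd '' p

/-- The image of a set `X` under a partial map given as a graph. -/
def pimage {H : Type*} {H' : Type*} (p : Set (H × H')) (X : Set H) : Set H' :=
  {b | ∃ a ∈ X, (a, b) ∈ p}

/-- A partial map (given as its graph `p`) is a partial embedding if it preserves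
quantifier-free first-order formulas. (This forces `p` to be the graph of an
injective partial function.) -/
def IsPartialEmbedding {H : Type u} {H' : Type u} [L.Structure H] [L.Structure H']
    (p : Set (H × H')) : Prop :=
  ∀ (n : ℕ) (φ : L.Formula (Fin n)), BoundedFormula.IsQF φ →
    ∀ (a : Fin n → H) (b : Fin n → H'), (∀ i, (a i, b i) ∈ p) →
      (φ.Realize a ↔ φ.Realize b)

/-- A partial map is a σ-embedding if it is a partial embedding and preserves all
`L_{ω₁,ω}`-formulas with (possibly infinitely many) parameters from its domain;
equivalently `⟨M, m⟩_{m ∈ dom p} ≡_{ω₁,ω} ⟨N, p(m)⟩_{m ∈ dom p}`. -/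
def IsSigmaEmbedding {H : Type u} {H' : Type u} [L.Structure H] [L.Structure H']
    (p : Set (H × H')) : Prop :=
  IsPartialEmbedding (L := L) p ∧
    ∀ (φ : InfFormula L (↥(pdom p)) 0) (b : ↥(pdom p) → H'),
      (∀ x : ↥(pdom p), ((x : H), b x) ∈ p) →
        (φ.Realize Subtype.val (fun i => i.elim0) ↔ φ.Realize b (fun i => i.elim0))

/-- A pregeometry (combinatorial geometry) on a set. -/
structure IsPregeometry {α : Type*} (cl : Set α → Set α) : Prop where
  subset_cl : ∀ X, X ⊆ cl X
  mono : ∀ ⦃X Y : Set α⦄, X ⊆ Y → cl X ⊆ cl Y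
  idem : ∀ X, cl (cl X) = cl X
  finChar : ∀ (X : Set α) (y : α), y ∈ cl X → ∃ F : Finset α, ↑F ⊆ X ∧ y ∈ cl ↑F
  exchange : ∀ (X : Set α) (a b : α), a ∈ cl (X ∪ {b}) → a ∉ cl X → b ∈ cl (X ∪ {a})

/-- A pair `⟨H, cl_H⟩` of an `L`-structure and a closure operator on it. -/
structure QMObj (L : FirstOrder.Language.{v, w}) where
  carrier : Type u
  [str : L.Structure carrier]
  cl : Set carrier → Set carrier

attribute [instance] QMObj.str

/-- `G` is countable and closed, or empty. -/
def CCOE (H : QMObj.{u} L) (G : Set H.carrier) : Prop :=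
  (G.Countable ∧ H.cl G = G) ∨ G = ∅

/-- The axioms for a class of pairs `⟨H, cl_H⟩` to be a quasiminimal pregeometry class. -/
structure IsQMClass (C : Set (QMObj.{u} L)) : Prop where
  /-- Closure under isomorphisms, transporting the closure operator. -/
  iso_closed : ∀ H ∈ C, ∀ (N : Type u) [_iN : L.Structure N] (f : H.carrier ≃[L] N),
      (⟨N, fun X => f '' (H.cl (f ⁻¹' X))⟩ : QMObj L) ∈ C
  /-- Any two members satisfy the same quantifier-free sentences. -/
  qf_theory : ∀ H ∈ C, ∀ H' ∈ C, ∀ (φ : L.Sentence), BoundedFormula.IsQF φ →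
      (H.carrier ⊨ φ ↔ H'.carrier ⊨ φ)
  /-- Each `cl_H` is a pregeometry. -/
  pregeom : ∀ H ∈ C, IsPregeometry H.cl
  /-- The closure of a finite set is countable. -/
  cl_finite_countable : ∀ H ∈ C, ∀ X : Set H.carrier, X.Finite → (H.cl X).Countable
  /-- The closure of any set is (the underlying set of) a substructure which, with the
  restricted closure operator, is again a member of the class. -/
  cl_mem : ∀ H ∈ C, ∀ X : Set H.carrier, ∃ S : L.Substructure H.carrier,
      (S : Set H.carrier) = H.cl X ∧
      (⟨↥S, fun Y => Subtype.val ⁻¹' (H.cl (Subtype.val '' Y))⟩ : QMObj L) ∈ C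
  /-- Partial embeddings preserve and reflect the closure relation. -/
  cl_embedding : ∀ H ∈ C, ∀ H' ∈ C, ∀ (p : Set (H.carrier × H'.carrier)),
      IsPartialEmbedding (L := L) p → ∀ X ⊆ pdom p, ∀ (y : H.carrier) (y' : H'.carrier),
        (y, y') ∈ p → (y ∈ H.cl X ↔ y' ∈ H'.cl (pimage p X))
  /-- ℵ₀-homogeneity over countable closed models, part (i): an isomorphism between
  countable closed (or empty) sets extends by any pair of independent points. -/
  homogeneity₁ : ∀ H ∈ C, ∀ H' ∈ C, ∀ (g : Set (H.carrier × H'.carrier)),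
      CCOE H (pdom g) → CCOE H' (pimg g) → IsPartialEmbedding (L := L) g →
      ∀ (x : H.carrier) (x' : H'.carrier), x ∉ H.cl (pdom g) → x' ∉ H'.cl (pimg g) →
        IsPartialEmbedding (L := L) (g ∪ {(x, x')})
  /-- ℵ₀-homogeneity over countable closed models, part (ii). -/
  homogeneity₂ : ∀ H ∈ C, ∀ H' ∈ C, ∀ (g f : Set (H.carrier × H'.carrier)),
      CCOE H (pdom g) → CCOE H' (pimg g) → IsPartialEmbedding (L := L) g →
      (pdom f).Finite → IsPartialEmbedding (L := L) (g ∪ f) →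
      ∀ y ∈ H.cl (pdom f ∪ pdom g), ∃ y' : H'.carrier,
        IsPartialEmbedding (L := L) (g ∪ f ∪ {(y, y')})


/-- `p` is a σ-type over `A` in `m` variables: every countable subset of `p` is
consistent with the structure, i.e. simultaneously satisfiable. -/
def IsSigmaType {M : Type u'} [L.Structure M] {A : Set M} {m : ℕ}
    (p : Set (InfFormula L (↥A ⊕ Fin m) 0)) : Prop :=
  ∀ Φ ⊆ p, Φ.Countable → ∃ v : Fin m → M, ∀ φ ∈ Φ, φ.RealizeP v

/-- A σ-type `p` is isolated if there is a consistent `L_{ω₁,ω}`-formula `ψ(x̄)`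
(possibly with parameters from `M`) such that `ψ` implies every formula of `p`. -/
def IsIsolated {M : Type u'} [L.Structure M] {A : Set M} {m : ℕ}
    (p : Set (InfFormula L (↥A ⊕ Fin m) 0)) : Prop :=
  ∃ ψ : InfFormula L (M ⊕ Fin m) 0,
    (∃ v : Fin m → M, ψ.Realize (Sum.elim id v) (fun i => i.elim0)) ∧
    ∀ φ ∈ p, ∀ v : Fin m → M, ψ.Realize (Sum.elim id v) (fun i => i.elim0) → φ.RealizeP v

/-- A σ-type `p` is realised if some tuple satisfies every formula of `p`. -/
def IsRealized {M : Type u'} [L.Structure M] {A : Set M} {m : ℕ}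
    (p : Set (InfFormula L (↥A ⊕ Fin m) 0)) : Prop :=
  ∃ v : Fin m → M, ∀ φ ∈ p, φ.RealizeP v

/-- `B` is an independent subset of the pregeometry `⟨H, cl_H⟩`. -/
def IsIndep (H : QMObj.{u} L) (B : Set H.carrier) : Prop :=
  ∀ x ∈ B, x ∉ H.cl (B \ {x})

/-- `B` is a basis of the pregeometry `⟨H, cl_H⟩`: a maximal independent subset. -/
def IsBasis (H : QMObj.{u} L) (B : Set H.carrier) : Prop :=
  IsIndep H B ∧ ∀ B' : Set H.carrier, B ⊆ B' → IsIndep H B' → B' = B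

/-- The model-theoretic algebraic closure of `X` in `M`: the set of elements
satisfying some first-order formula with parameters in `X` having finitely many
solutions. -/
def aclS (L : FirstOrder.Language.{v, w}) (M : Type u) [L.Structure M] (X : Set M) :
    Set M :=
  {y | ∃ (n : ℕ) (φ : L.BoundedFormula (Fin n) 1) (v : Fin n → M),
    (∀ i, v i ∈ X) ∧ φ.Realize v ![y] ∧ {z : M | φ.Realize v ![z]}.Finite}


/-! ### Calculus of partial embeddings (as graphs) -/

section Graphs

variable {A B D : Type u} [L.Structure A] [L.Structure B] [L.Structure D]

/-- Inverse graph. -/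
def pinv {A B : Type u} (p : Set (A × B)) : Set (B × A) := {x | (x.2, x.1) ∈ p}

/-- Composition of graphs. -/
def pcomp {A B D : Type u} (p : Set (A × B)) (q : Set (B × D)) : Set (A × D) :=
  {x | ∃ b, (x.1, b) ∈ p ∧ (b, x.2) ∈ q}

/-- The identity on a set. -/
def idOn {A : Type u} (K : Set A) : Set (A × A) := {x | x.1 = x.2 ∧ x.1 ∈ K}

/-- Restriction of a graph to a set. -/
def prestr {A B : Type u} (p : Set (A × B)) (K : Set A) : Set (A × B) := {x | x ∈ p ∧ x.1 ∈ K}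

theorem mem_pdom {A B : Type u} {p : Set (A × B)} {a : A} : a ∈ pdom p ↔ ∃ b, (a, b) ∈ p := by
  simp [pdom]

theorem mem_pimg {A B : Type u} {p : Set (A × B)} {b : B} : b ∈ pimg p ↔ ∃ a, (a, b) ∈ p := by
  simp [pimg]

theorem pdom_pinv {A B : Type u} (p : Set (A × B)) : pdom (pinv p) = pimg p := by
  ext x; rw [mem_pdom, mem_pimg]; rfl

theorem pimg_pinv {A B : Type u} (p : Set (A × B)) : pimg (pinv p) = pdom p := by
  ext x; rw [mem_pdom, mem_pimg]; rfl

theorem pe_mono {p q : Set (A × B)} (hq : IsPartialEmbedding (L := L) q) (h : p ⊆ q) :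
    IsPartialEmbedding (L := L) p :=
  fun n φ hφ a b hab => hq n φ hφ a b fun i => h (hab i)

theorem pe_inv {p : Set (A × B)} (hp : IsPartialEmbedding (L := L) p) :
    IsPartialEmbedding (L := L) (pinv p) :=
  fun n φ hφ a b hab => (hp n φ hφ b a fun i => hab i).symm

theorem pe_comp {p : Set (A × B)} {q : Set (B × D)} (hp : IsPartialEmbedding (L := L) p)
    (hq : IsPartialEmbedding (L := L) q) : IsPartialEmbedding (L := L) (pcomp p q) := by
  intro n φ hφ a b hab
  choose c hc1 hc2 using hab
  exact (hp n φ hφ a c hc1).trans (hq n φ hφ c b hc2)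

theorem pe_id (K : Set A) : IsPartialEmbedding (L := L) (idOn K) := by
  intro n φ hφ a b hab
  have : a = b := funext fun i => (hab i).1
  rw [this]

theorem pe_of_finite {p : Set (A × B)}
    (h : ∀ t ⊆ p, t.Finite → IsPartialEmbedding (L := L) t) :
    IsPartialEmbedding (L := L) p := by
  intro n φ hφ a b hab
  refine h (Set.range fun i => (a i, b i)) ?_ (Set.finite_range _) n φ hφ a b fun i => ⟨i, rfl⟩
  rintro _ ⟨i, rfl⟩; exact hab i

theorem pe_eq_iff {p : Set (A × B)} (hp : IsPartialEmbedding (L := L) p) {a a' : A} {b b' : B}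
    (h : (a, b) ∈ p) (h' : (a', b') ∈ p) : a = a' ↔ b = b' := by
  have := hp 2 (Term.equal (Term.var 0) (Term.var 1))
    (BoundedFormula.IsAtomic.equal _ _).isQF ![a, a'] ![b, b']
    (by intro i; fin_cases i <;> simpa)
  simpa [Formula.realize_equal] using this

theorem pe_fun {p : Set (A × B)} (hp : IsPartialEmbedding (L := L) p) {a : A} {b b' : B}
    (h : (a, b) ∈ p) (h' : (a, b') ∈ p) : b = b' := (pe_eq_iff hp h h').1 rfl

theorem pe_inj {p : Set (A × B)} (hp : IsPartialEmbedding (L := L) p) {a a' : A} {b : B}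
    (h : (a, b) ∈ p) (h' : (a', b) ∈ p) : a = a' := (pe_eq_iff hp h h').2 rfl

/-- Union of a directed family of partial embeddings. -/
theorem pe_iUnion {ι : Type*} [Nonempty ι] (p : ι → Set (A × B))
    (hd : ∀ i j, ∃ k, p i ⊆ p k ∧ p j ⊆ p k)
    (hp : ∀ i, IsPartialEmbedding (L := L) (p i)) :
    IsPartialEmbedding (L := L) (⋃ i, p i) := by
  apply pe_of_finite
  intro t ht hfin
  have : ∃ k, t ⊆ p k := by
    induction t, hfin using Set.Finite.induction_on with
    | empty => exact ⟨Classical.arbitrary ι, Set.empty_subset _⟩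
    | insert _ _ ih =>
      obtain ⟨k, hk⟩ := ih ((Set.subset_insert _ _).trans ht)
      obtain ⟨j, hj⟩ := Set.mem_iUnion.1 (ht (Set.mem_insert _ _))
      obtain ⟨l, hl1, hl2⟩ := hd k j
      exact ⟨l, Set.insert_subset (hl2 hj) (hk.trans hl1)⟩
  obtain ⟨k, hk⟩ := this
  exact pe_mono (hp k) hk

/-- General back-and-forth. -/
theorem back_and_forth {K : Set A} {K' : Set B} (hK : K.Countable) (hK' : K'.Countable)
    {p : Set (A × B)} (hp : IsPartialEmbedding (L := L) p) (hpK : p ⊆ K ×ˢ K')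
    (forth : ∀ s : Set (A × B), s.Finite → s ⊆ K ×ˢ K' → IsPartialEmbedding (L := L) (p ∪ s) →
      ∀ a ∈ K, ∃ a' ∈ K', IsPartialEmbedding (L := L) (p ∪ s ∪ {(a, a')}))
    (back : ∀ s : Set (A × B), s.Finite → s ⊆ K ×ˢ K' → IsPartialEmbedding (L := L) (p ∪ s) →
      ∀ a' ∈ K', ∃ a ∈ K, IsPartialEmbedding (L := L) (p ∪ s ∪ {(a, a')})) :
    ∃ q, p ⊆ q ∧ IsPartialEmbedding (L := L) q ∧ pdom q = K ∧ pimg q = K' := by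
  classical
  let P := {s : Set (A × B) // s.Finite ∧ s ⊆ K ×ˢ K' ∧ IsPartialEmbedding (L := L) (p ∪ s)}
  let p0 : P := ⟨∅, Set.finite_empty, Set.empty_subset _, by simpa using hp⟩
  have := hK.to_subtype
  have := hK'.to_subtype
  let _ : Encodable (K ⊕ K') := Encodable.ofCountable _
  let cof : K ⊕ K' → Order.Cofinal P := fun x => match x with
    | Sum.inl a => ⟨{s | a.1 ∈ pdom s.1}, by
        rintro ⟨s, hs, hsK, hsp⟩
        obtain ⟨a', ha', h⟩ := forth s hs hsK hsp a.1 a.2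
        refine ⟨⟨s ∪ {(a.1, a')}, hs.union (Set.finite_singleton _),
          Set.union_subset hsK (Set.singleton_subset_iff.2 ⟨a.2, ha'⟩), by rwa [← Set.union_assoc]⟩, ?_, ?_⟩
        · exact mem_pdom.2 ⟨a', Or.inr rfl⟩
        · exact Set.subset_union_left⟩
    | Sum.inr b => ⟨{s | b.1 ∈ pimg s.1}, by
        rintro ⟨s, hs, hsK, hsp⟩
        obtain ⟨a', ha', h⟩ := back s hs hsK hsp b.1 b.2
        refine ⟨⟨s ∪ {(a', b.1)}, hs.union (Set.finite_singleton _),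
          Set.union_subset hsK (Set.singleton_subset_iff.2 ⟨ha', b.2⟩), by rwa [← Set.union_assoc]⟩, ?_, ?_⟩
        · exact mem_pimg.2 ⟨a', Or.inr rfl⟩
        · exact Set.subset_union_left⟩
  let sq : ℕ → P := Order.sequenceOfCofinals p0 cof
  have hmono : Monotone sq := Order.sequenceOfCofinals.monotone p0 cof
  have hmem : ∀ x, ∃ n, sq n ∈ cof x := fun x =>
    ⟨Encodable.encode x + 1, Order.sequenceOfCofinals.encode_mem p0 cof x⟩
  refine ⟨⋃ n, p ∪ (sq n).1, ?_, ?_, ?_, ?_⟩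
  · exact Set.subset_iUnion_of_subset 0 Set.subset_union_left
  · apply pe_iUnion
    · intro i j
      exact ⟨max i j, Set.union_subset_union_right _ (hmono (le_max_left i j)),
        Set.union_subset_union_right _ (hmono (le_max_right i j))⟩
    · exact fun i => (sq i).2.2.2
  · ext a
    rw [mem_pdom]
    constructor
    · rintro ⟨b, hb⟩
      obtain ⟨n, hn⟩ := Set.mem_iUnion.1 hb
      rcases hn with hn | hn
      · exact (hpK hn).1
      · exact ((sq n).2.2.1 hn).1
    · intro ha
      obtain ⟨n, hn⟩ := hmem (Sum.inl ⟨a, ha⟩)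
      obtain ⟨b, hb⟩ := mem_pdom.1 (show a ∈ pdom (sq n).1 from hn)
      exact ⟨b, Set.mem_iUnion.2 ⟨n, Or.inr hb⟩⟩
  · ext a
    rw [mem_pimg]
    constructor
    · rintro ⟨b, hb⟩
      obtain ⟨n, hn⟩ := Set.mem_iUnion.1 hb
      rcases hn with hn | hn
      · exact (hpK hn).2
      · exact ((sq n).2.2.1 hn).2
    · intro ha
      obtain ⟨n, hn⟩ := hmem (Sum.inr ⟨a, ha⟩)
      obtain ⟨b, hb⟩ := mem_pimg.1 (show a ∈ pimg (sq n).1 from hn)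
      exact ⟨b, Set.mem_iUnion.2 ⟨n, Or.inr hb⟩⟩

/-- A total, surjective partial embedding is an isomorphism. -/
theorem equiv_of_pe {p : Set (A × B)} (hp : IsPartialEmbedding (L := L) p)
    (h1 : pdom p = Set.univ) (h2 : pimg p = Set.univ) :
    ∃ g : A ≃[L] B, ∀ x, (x, g x) ∈ p := by
  classical
  have H1 : ∀ a, ∃ b, (a, b) ∈ p := fun a => mem_pdom.1 (h1 ▸ Set.mem_univ a)
  have H2 : ∀ b, ∃ a, (a, b) ∈ p := fun b => mem_pimg.1 (h2 ▸ Set.mem_univ b)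
  choose f hf using H1
  choose g hg using H2
  refine ⟨{ toFun := f, invFun := g, left_inv := fun a => pe_inj hp (hg _) (hf _),
            right_inv := fun b => pe_fun hp (hf _) (hg _), map_fun' := ?_, map_rel' := ?_ }, hf⟩
  · intro n F x
    have := hp (n + 1) (Term.equal (Term.func F fun i => Term.var i.castSucc)
      (Term.var (Fin.last n))) (BoundedFormula.IsAtomic.equal _ _).isQF
      (Fin.snoc x (Structure.funMap F x)) (Fin.snoc (f ∘ x) (f (Structure.funMap F x)))
      (by intro i; refine Fin.lastCases ?_ (fun j => ?_) i
          · simpa using hf _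
          · simpa using hf _)
    simp [Formula.realize_equal] at this
    exact this.symm
  · intro n R x
    have := hp n (R.formula fun i => Term.var i)
      (BoundedFormula.IsAtomic.rel _ _).isQF x (f ∘ x) (fun i => hf _)
    simp only [Formula.realize_rel] at this
    exact this.symm

end Graphs

/-! ### Pregeometry facts -/

section Pregeom

variable {α : Type*} {cl : Set α → Set α}

theorem cl_subset (h : IsPregeometry cl) {X Y : Set α} (hXY : X ⊆ cl Y) : cl X ⊆ cl Y := by
  have := h.mono hXY
  rwa [h.idem] at this

theorem cl_union_cl (h : IsPregeometry cl) (X : Set α) (x : α) :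
    cl (cl X ∪ {x}) = cl (X ∪ {x}) := by
  apply Set.Subset.antisymm
  · apply cl_subset h
    apply Set.union_subset (h.mono Set.subset_union_left)
    exact Set.subset_union_right.trans (h.subset_cl _)
  · exact h.mono (Set.union_subset_union_left _ (h.subset_cl _))

theorem cl_countable (h : IsPregeometry cl) (hf : ∀ X : Set α, X.Finite → (cl X).Countable)
    {X : Set α} (hX : X.Countable) : (cl X).Countable := by
  have : cl X ⊆ ⋃ t ∈ {t : Set α | t.Finite ∧ t ⊆ X}, cl t := by
    intro y hy
    obtain ⟨F, hF, hy⟩ := h.finChar X y hy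
    exact Set.mem_biUnion (show (F : Set α) ∈ _ from ⟨F.finite_toSet, hF⟩) hy
  refine Set.Countable.mono this (Set.Countable.biUnion ?_ fun t ht => hf t ht.1)
  exact Set.countable_ofPred_finite_subset hX

/-- finite character for indexed families -/
theorem finChar_image (h : IsPregeometry cl) {I : Type*} (w : I → α) {S : Set I} {y : α}
    (hy : y ∈ cl (w '' S)) : ∃ F ⊆ S, F.Finite ∧ y ∈ cl (w '' F) := by
  obtain ⟨F, hF, hy⟩ := h.finChar _ y hy
  obtain ⟨T, hT, hTF, hTi⟩ := (Set.exists_subset_image_finite_and (p := fun X => y ∈ cl X)).1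
    ⟨(F : Set α), hF, F.finite_toSet, hy⟩
  exact ⟨T, hT, hTF, hTi⟩

end Pregeom
/-! ### Extension over countable closed sets -/

section Ext

variable {C : Set (QMObj.{u} L)} {H H' : QMObj.{u} L}

theorem mem_cl_transfer (hC : IsQMClass C) (hH : H ∈ C) (hH' : H' ∈ C)
    {p : Set (H.carrier × H'.carrier)} (hp : IsPartialEmbedding (L := L) p)
    {a : H.carrier} {b : H'.carrier} (hab : (a, b) ∈ p) {X : Set H.carrier} {Y : Set H'.carrier}
    (ha : a ∈ H.cl X) (hX : X ⊆ pdom p)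
    (hXY : ∀ x ∈ X, ∀ y, (x, y) ∈ p → y ∈ H'.cl Y) : b ∈ H'.cl Y := by
  have := (hC.cl_embedding H hH H' hH' p hp X hX a b hab).1 ha
  refine cl_subset (hC.pregeom H' hH') ?_ this
  rintro y ⟨x, hx, hxy⟩
  exact hXY x hx y hxy

theorem ext_forth (hC : IsQMClass C) (hH : H ∈ C) (hH' : H' ∈ C)
    {g f s : Set (H.carrier × H'.carrier)} (hg1 : CCOE H (pdom g)) (hg2 : CCOE H' (pimg g))
    (hf : f.Finite) (hs : s.Finite) (h : IsPartialEmbedding (L := L) (g ∪ f ∪ s))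
    {a : H.carrier} (ha : a ∈ H.cl (pdom (g ∪ f))) :
    ∃ a' ∈ H'.cl (pimg (g ∪ f)), IsPartialEmbedding (L := L) (g ∪ f ∪ s ∪ {(a, a')}) := by
  obtain ⟨a', ha'⟩ := hC.homogeneity₂ H hH H' hH' g (f ∪ s) hg1 hg2
    (pe_mono h (by rw [Set.union_assoc]; exact Set.subset_union_left))
    ((hf.union hs).image _) (by rwa [← Set.union_assoc]) a (by
      refine (hC.pregeom H hH).mono ?_ ha
      rintro x hx
      obtain ⟨y, hy⟩ := mem_pdom.1 hx
      rcases hy with hy | hy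
      · exact Or.inr (mem_pdom.2 ⟨y, hy⟩)
      · exact Or.inl (mem_pdom.2 ⟨y, Or.inl hy⟩))
  rw [← Set.union_assoc] at ha'
  refine ⟨a', ?_, ha'⟩
  refine mem_cl_transfer hC hH hH' ha' (Or.inr rfl) ha ?_ ?_
  · intro x hx
    obtain ⟨y, hy⟩ := mem_pdom.1 hx
    exact mem_pdom.2 ⟨y, Or.inl (Or.inl hy)⟩
  · intro x hx y hy
    obtain ⟨y', hy'⟩ := mem_pdom.1 hx
    have := pe_fun ha' hy (Or.inl (Or.inl hy'))
    subst this
    exact (hC.pregeom H' hH').subset_cl _ (mem_pimg.2 ⟨x, hy'⟩)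

theorem ext_closed (hC : IsQMClass C) (hH : H ∈ C) (hH' : H' ∈ C)
    {g f : Set (H.carrier × H'.carrier)} (hg1 : CCOE H (pdom g)) (hg2 : CCOE H' (pimg g))
    (hf : f.Finite) (h : IsPartialEmbedding (L := L) (g ∪ f)) :
    ∃ q, g ∪ f ⊆ q ∧ IsPartialEmbedding (L := L) q ∧ pdom q = H.cl (pdom (g ∪ f)) ∧
      pimg q = H'.cl (pimg (g ∪ f)) := by
  have hc1 : (pdom (g ∪ f)).Countable := by
    rw [pdom, Set.image_union]
    refine Set.Countable.union ?_ (hf.image _).countable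
    rcases hg1 with h | h
    · exact h.1
    · rw [pdom] at h; rw [h]; exact Set.countable_empty
  have hc2 : (pimg (g ∪ f)).Countable := by
    rw [pimg, Set.image_union]
    refine Set.Countable.union ?_ (hf.image _).countable
    rcases hg2 with h | h
    · exact h.1
    · rw [pimg] at h; rw [h]; exact Set.countable_empty
  refine back_and_forth (cl_countable (hC.pregeom H hH) (hC.cl_finite_countable H hH) hc1)
    (cl_countable (hC.pregeom H' hH') (hC.cl_finite_countable H' hH') hc2) h ?_ ?_ ?_
  · rintro ⟨x, y⟩ hxy
    exact ⟨(hC.pregeom H hH).subset_cl _ (mem_pdom.2 ⟨y, hxy⟩),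
      (hC.pregeom H' hH').subset_cl _ (mem_pimg.2 ⟨x, hxy⟩)⟩
  · intro s hs _ hp a ha
    exact ext_forth hC hH hH' hg1 hg2 hf hs hp ha
  · intro s hs _ hp a ha
    have hi : ∀ t : Set (H.carrier × H'.carrier), t.Finite → (pinv t).Finite := by
      intro t ht
      have : pinv t = Prod.swap '' t := by
        rw [Set.image_swap_eq_preimage_swap]; rfl
      rw [this]; exact ht.image _
    obtain ⟨a', ha', h'⟩ := ext_forth hC hH' hH (g := pinv g) (f := pinv f) (s := pinv s)
      (by rwa [pdom_pinv]) (by rwa [pimg_pinv]) (hi f hf) (hi s hs) (pe_inv hp) (a := a)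
      (by rw [show pinv g ∪ pinv f = pinv (g ∪ f) from rfl, pdom_pinv]; exact ha)
    refine ⟨a', ?_, ?_⟩
    · rwa [show pinv g ∪ pinv f = pinv (g ∪ f) from rfl, pimg_pinv] at ha'
    · refine pe_mono (pe_inv h') ?_
      rintro ⟨x, y⟩ hxy
      rcases hxy with hxy | hxy
      · exact Or.inl hxy
      · refine Or.inr ?_
        cases hxy; rfl

theorem pe_empty (hC : IsQMClass C) (hH : H ∈ C) (hH' : H' ∈ C) :
    IsPartialEmbedding (L := L) (∅ : Set (H.carrier × H'.carrier)) := by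
  intro n φ hφ a b hab
  rcases n with _ | n
  · have := hC.qf_theory H hH H' hH' (Formula.relabel (fun i : Fin 0 => (i.elim0 : Empty)) φ)
      (BoundedFormula.IsQF.relabel hφ _)
    simp only [Sentence.Realize, Formula.realize_relabel] at this
    convert this using 2
  · exact (hab 0).elim

/-- Independence of an indexed family on a set of indices. -/
def Ind {I : Type u} (H : QMObj.{u} L) (u : I → H.carrier) (S : Set I) : Prop :=
  ∀ i ∈ S, u i ∉ H.cl (u '' (S \ {i}))

/-- Isomorphisms `⟨S⟩ → ⟨S⟩'` extending `u i ↦ u' i`. -/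
structure IsIso {I : Type u} (H H' : QMObj.{u} L) (u : I → H.carrier) (u' : I → H'.carrier)
    (S : Set I) (q : Set (H.carrier × H'.carrier)) : Prop where
  pe : IsPartialEmbedding (L := L) q
  dom : pdom q = H.cl (u '' S)
  img : pimg q = H'.cl (u' '' S)
  base : ∀ i ∈ S, (u i, u' i) ∈ q

variable {I : Type u} {u : I → H.carrier} {u' : I → H'.carrier}

theorem Ind.mono (hC : IsQMClass C) (hH : H ∈ C) {S T : Set I} (h : Ind H u T) (hST : S ⊆ T) :
    Ind H u S := fun i hi hc => h i (hST hi)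
      ((hC.pregeom H hH).mono (Set.image_mono (Set.sdiff_subset_sdiff_left hST)) hc)

theorem Ind.not_mem (hC : IsQMClass C) (hH : H ∈ C) {S T : Set I} (h : Ind H u T) {i : I}
    (hi : i ∈ T) (hS : S ⊆ T) (hiS : i ∉ S) : u i ∉ H.cl (u '' S) := fun hc => h i hi
      ((hC.pregeom H hH).mono (Set.image_mono
        (Set.subset_sdiff_singleton hS hiS)) hc)

theorem span_countable (hC : IsQMClass C) (hH : H ∈ C) {S : Set I} (hS : S.Countable)
    (u : I → H.carrier) : (H.cl (u '' S)).Countable :=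
  cl_countable (hC.pregeom H hH) (hC.cl_finite_countable H hH) (hS.image u)

theorem span_ccoe (hC : IsQMClass C) (hH : H ∈ C) {S : Set I} (hS : S.Countable)
    (u : I → H.carrier) : CCOE H (H.cl (u '' S)) :=
  Or.inl ⟨span_countable hC hH hS u, (hC.pregeom H hH).idem _⟩

theorem span_mono (hC : IsQMClass C) (hH : H ∈ C) {S T : Set I} (u : I → H.carrier)
    (h : S ⊆ T) : H.cl (u '' S) ⊆ H.cl (u '' T) :=
  (hC.pregeom H hH).mono (Set.image_mono h)

theorem mem_span (hC : IsQMClass C) (hH : H ∈ C) {S : Set I} {i : I} (u : I → H.carrier)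
    (h : i ∈ S) : u i ∈ H.cl (u '' S) :=
  (hC.pregeom H hH).subset_cl _ ⟨i, h, rfl⟩

theorem IsIso.inv {S : Set I} {q : Set (H.carrier × H'.carrier)} (h : IsIso H H' u u' S q) :
    IsIso H' H u' u S (pinv q) :=
  ⟨pe_inv h.pe, by rw [pdom_pinv, h.img], by rw [pimg_pinv, h.dom], h.base⟩

/-- membership transfer along a partial embedding matching `u` and `u'` -/
theorem span_transfer (hC : IsQMClass C) (hH : H ∈ C) (hH' : H' ∈ C)
    {p : Set (H.carrier × H'.carrier)} (hp : IsPartialEmbedding (L := L) p)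
    {T : Set I} (hT : ∀ i ∈ T, (u i, u' i) ∈ p) {a : H.carrier} {b : H'.carrier}
    (hab : (a, b) ∈ p) (ha : a ∈ H.cl (u '' T)) : b ∈ H'.cl (u' '' T) := by
  refine mem_cl_transfer hC hH hH' hp hab ha ?_ ?_
  · rintro _ ⟨i, hi, rfl⟩
    exact mem_pdom.2 ⟨_, hT i hi⟩
  · rintro _ ⟨i, hi, rfl⟩ y hy
    rw [pe_fun hp hy (hT i hi)]
    exact mem_span hC hH' u' hi

theorem span_transfer' (hC : IsQMClass C) (hH : H ∈ C) (hH' : H' ∈ C)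
    {p : Set (H.carrier × H'.carrier)} (hp : IsPartialEmbedding (L := L) p)
    {T : Set I} (hT : ∀ i ∈ T, (u i, u' i) ∈ p) {a : H.carrier} {b : H'.carrier}
    (hab : (a, b) ∈ p) (hb : b ∈ H'.cl (u' '' T)) : a ∈ H.cl (u '' T) :=
  span_transfer hC hH' hH (pe_inv hp) (p := pinv p) (u := u') (u' := u) hT hab hb

theorem iso_union (hC : IsQMClass C) (hH : H ∈ C) (hH' : H' ∈ C) {ι : Type*} [Nonempty ι]
    (T : ι → Set I) (q : ι → Set (H.carrier × H'.carrier))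
    (hd : ∀ i j, ∃ k, T i ⊆ T k ∧ T j ⊆ T k ∧ q i ⊆ q k ∧ q j ⊆ q k)
    (h : ∀ i, IsIso H H' u u' (T i) (q i)) : IsIso H H' u u' (⋃ i, T i) (⋃ i, q i) := by
  have key : ∀ F : Set I, F.Finite → F ⊆ ⋃ i, T i → ∃ k, F ⊆ T k := by
    intro F hF
    induction F, hF using Set.Finite.induction_on with
    | empty => exact fun _ => ⟨Classical.arbitrary ι, Set.empty_subset _⟩
    | insert _ _ ih =>
      intro hs
      obtain ⟨k, hk⟩ := ih ((Set.subset_insert _ _).trans hs)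
      obtain ⟨j, hj⟩ := Set.mem_iUnion.1 (hs (Set.mem_insert _ _))
      obtain ⟨l, hl1, hl2, -, -⟩ := hd k j
      exact ⟨l, Set.insert_subset (hl2 hj) (hk.trans hl1)⟩
  refine ⟨pe_iUnion q ?_ fun i => (h i).pe, ?_, ?_, ?_⟩
  · intro i j
    obtain ⟨k, -, -, h1, h2⟩ := hd i j
    exact ⟨k, h1, h2⟩
  · ext a
    constructor
    · intro ha
      obtain ⟨b, hb⟩ := mem_pdom.1 ha
      obtain ⟨i, hi⟩ := Set.mem_iUnion.1 hb
      have : a ∈ pdom (q i) := mem_pdom.2 ⟨b, hi⟩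
      rw [(h i).dom] at this
      exact span_mono hC hH u (Set.subset_iUnion T i) this
    · intro ha
      obtain ⟨F, hF, hfin, haF⟩ := finChar_image (hC.pregeom H hH) u ha
      obtain ⟨k, hk⟩ := key F hfin hF
      have : a ∈ pdom (q k) := by rw [(h k).dom]; exact span_mono hC hH u hk haF
      obtain ⟨b, hb⟩ := mem_pdom.1 this
      exact mem_pdom.2 ⟨b, Set.mem_iUnion.2 ⟨k, hb⟩⟩
  · ext a
    constructor
    · intro ha
      obtain ⟨b, hb⟩ := mem_pimg.1 ha
      obtain ⟨i, hi⟩ := Set.mem_iUnion.1 hb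
      have : a ∈ pimg (q i) := mem_pimg.2 ⟨b, hi⟩
      rw [(h i).img] at this
      exact span_mono hC hH' u' (Set.subset_iUnion T i) this
    · intro ha
      obtain ⟨F, hF, hfin, haF⟩ := finChar_image (hC.pregeom H' hH') u' ha
      obtain ⟨k, hk⟩ := key F hfin hF
      have : a ∈ pimg (q k) := by rw [(h k).img]; exact span_mono hC hH' u' hk haF
      obtain ⟨b, hb⟩ := mem_pimg.1 this
      exact mem_pimg.2 ⟨b, Set.mem_iUnion.2 ⟨k, hb⟩⟩
  · intro i hi
    obtain ⟨k, hk⟩ := Set.mem_iUnion.1 hi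
    exact Set.mem_iUnion.2 ⟨k, (h k).base i hk⟩

theorem pdom_union_singleton {A B : Type u} (g : Set (A × B)) (x : A) (y : B) :
    pdom (g ∪ {(x, y)}) = pdom g ∪ {x} := by
  simp [pdom, Set.image_insert_eq, Set.union_comm]

theorem pimg_union_singleton {A B : Type u} (g : Set (A × B)) (x : A) (y : B) :
    pimg (g ∪ {(x, y)}) = pimg g ∪ {y} := by
  simp [pimg, Set.image_insert_eq, Set.union_comm]

theorem cl_span_insert (hC : IsQMClass C) (hH : H ∈ C) (u : I → H.carrier) (S : Set I) (i : I) :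
    H.cl (H.cl (u '' S) ∪ {u i}) = H.cl (u '' (insert i S)) := by
  rw [cl_union_cl (hC.pregeom H hH), Set.image_insert_eq, Set.union_comm, Set.insert_eq]

/-- One step extension. -/
theorem full_one (hC : IsQMClass C) (hH : H ∈ C) (hH' : H' ∈ C) {S S' : Set I}
    (hS : S.Countable) (hS' : S'.Countable) {p : Set (H.carrier × H'.carrier)}
    (hp : IsPartialEmbedding (L := L) p) (hd : pdom p = H.cl (u '' S))
    (hi : pimg p = H'.cl (u' '' S')) {i j : I} (h1 : u i ∉ H.cl (u '' S))
    (h2 : u' j ∉ H'.cl (u' '' S')) :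
    ∃ q, p ⊆ q ∧ (u i, u' j) ∈ q ∧ IsPartialEmbedding (L := L) q ∧
      pdom q = H.cl (u '' (insert i S)) ∧ pimg q = H'.cl (u' '' (insert j S')) := by
  have c1 : CCOE H (pdom p) := by rw [hd]; exact span_ccoe hC hH hS u
  have c2 : CCOE H' (pimg p) := by rw [hi]; exact span_ccoe hC hH' hS' u'
  have h := hC.homogeneity₁ H hH H' hH' p c1 c2 hp (u i) (u' j)
    (by rw [hd, (hC.pregeom H hH).idem]; exact h1)
    (by rw [hi, (hC.pregeom H' hH').idem]; exact h2)
  obtain ⟨q, hq, hpe, hd', hi'⟩ := ext_closed hC hH hH' c1 c2 (Set.finite_singleton _) h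
  refine ⟨q, Set.subset_union_left.trans hq, hq (Or.inr rfl), hpe, ?_, ?_⟩
  · rw [hd', pdom_union_singleton, hd, cl_span_insert hC hH]
  · rw [hi', pimg_union_singleton, hi, cl_span_insert hC hH']

theorem iso_empty (hC : IsQMClass C) (hH : H ∈ C) (hH' : H' ∈ C) :
    ∃ q, IsIso H H' u u' ∅ q := by
  obtain ⟨q, -, hq, h1, h2⟩ := ext_closed hC hH hH' (g := ∅) (f := ∅)
    (Or.inr (by simp [pdom])) (Or.inr (by simp [pimg])) Set.finite_empty
    (by simpa using pe_empty hC hH hH')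
  refine ⟨q, hq, ?_, ?_, by simp⟩
  · simpa [pdom] using h1
  · simpa [pimg] using h2

theorem iso_exists (hC : IsQMClass C) (hH : H ∈ C) (hH' : H' ∈ C) {S : Set I}
    (hS : S.Countable) (hu : Ind H u S) (hu' : Ind H' u' S) : ∃ q, IsIso H H' u u' S q := by
  rcases S.eq_empty_or_nonempty with rfl | hne
  · exact iso_empty hC hH hH'
  obtain ⟨b, rfl⟩ := hS.exists_eq_range hne
  have step : ∀ k q, IsIso H H' u u' (b '' Set.Iio k) q →
      ∃ q', q ⊆ q' ∧ IsIso H H' u u' (b '' Set.Iio (k + 1)) q' := by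
    intro k q hq
    have hk : b '' Set.Iio (k + 1) = insert (b k) (b '' Set.Iio k) := by
      rw [← Set.image_insert_eq]; congr 1; ext; simp
    by_cases hb : b k ∈ b '' Set.Iio k
    · refine ⟨q, subset_rfl, ?_⟩
      rwa [hk, Set.insert_eq_of_mem hb]
    · obtain ⟨q', h1, h2, h3, h4, h5⟩ := full_one hC hH hH' (Set.to_countable _)
        (Set.to_countable _) hq.pe hq.dom hq.img (i := b k) (j := b k)
        (hu.not_mem hC hH ⟨k, rfl⟩ (Set.image_subset_range _ _) hb)
        (hu'.not_mem hC hH' ⟨k, rfl⟩ (Set.image_subset_range _ _) hb)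
      refine ⟨q', h1, ?_⟩
      rw [hk]
      refine ⟨h3, h4, h5, ?_⟩
      rintro i (rfl | hi)
      · exact h2
      · exact h1 (hq.base i hi)
  have h0 : ∃ q, IsIso H H' u u' (b '' Set.Iio 0) q := by
    simpa using iso_empty hC hH hH'
  choose! nx hnx1 hnx2 using step
  obtain ⟨q0, hq0⟩ := h0
  let sq : ℕ → Set (H.carrier × H'.carrier) := fun k => Nat.rec q0 (fun k q => nx k q) k
  have hsq : ∀ k, IsIso H H' u u' (b '' Set.Iio k) (sq k) := by
    intro k
    induction k with
    | zero => exact hq0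
    | succ k ih => exact hnx2 k _ ih
  have hm : Monotone sq := monotone_nat_of_le_succ fun k => hnx1 k _ (hsq k)
  have := iso_union hC hH hH' (fun k => b '' Set.Iio k) sq (by
    intro i j
    exact ⟨max i j, Set.image_mono (Set.Iio_subset_Iio (le_max_left _ _)),
      Set.image_mono (Set.Iio_subset_Iio (le_max_right _ _)), hm (le_max_left _ _),
      hm (le_max_right _ _)⟩) hsq
  refine ⟨⋃ k, sq k, ?_⟩
  · have hr : (⋃ k, b '' Set.Iio k) = Set.range b := by
      rw [← Set.image_iUnion, ← Set.image_univ]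
      congr 1
      ext x; simp only [Set.mem_iUnion, Set.mem_Iio, Set.mem_univ, iff_true]
      exact ⟨x + 1, by omega⟩
    rwa [hr] at this

/-- Swap maps. -/
structure IsSwap (H : QMObj.{u} L) (u : I → H.carrier) (S : Set I) (z W : I)
    (φ : Set (H.carrier × H.carrier)) : Prop where
  pe : IsPartialEmbedding (L := L) φ
  dom : pdom φ = H.cl (u '' (S \ {W}))
  img : pimg φ = H.cl (u '' (S \ {z}))
  fix : ∀ x ∈ H.cl (u '' (S \ {z, W})), (x, x) ∈ φ
  zW : (u z, u W) ∈ φ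

theorem swap_exists (hC : IsQMClass C) (hH : H ∈ C) {S : Set I} (hS : S.Countable)
    (hu : Ind H u S) {z W : I} (hz : z ∈ S) (hW : W ∈ S) (hzW : z ≠ W) :
    ∃ φ, IsSwap H u S z W φ := by
  have hR : (S \ {z, W}).Countable := hS.mono Set.sdiff_subset
  obtain ⟨q, h1, h2, h3, h4, h5⟩ := full_one hC hH hH hR hR
    (pe_id (L := L) (H.cl (u '' (S \ {z, W}))))
    (by ext x; simp [mem_pdom, idOn]) (by ext x; simp [mem_pimg, idOn]) (i := z) (j := W)
    (hu.not_mem hC hH hz Set.sdiff_subset (by simp)) (hu.not_mem hC hH hW Set.sdiff_subset (by simp))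
  refine ⟨q, h3, ?_, ?_, ?_, h2⟩
  · rw [h4]; congr 2; ext x; simp only [Set.mem_insert_iff, Set.mem_sdiff, Set.mem_singleton_iff]
    grind
  · rw [h5]; congr 2; ext x; simp only [Set.mem_insert_iff, Set.mem_sdiff, Set.mem_singleton_iff]
    grind
  · intro x hx
    exact h1 ⟨rfl, hx⟩

end Ext

/-! ### Crowns and orthogonality -/

section Crown

variable {C : Set (QMObj.{u} L)} {H H' : QMObj.{u} L}
variable {I : Type u} {u : I → H.carrier} {u' : I → H'.carrier}

/-- The crown. -/
def crown (H : QMObj.{u} L) (u : I → H.carrier) (S Z : Set I) : Set H.carrier :=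
  {a | ∃ z ∈ Z, a = u z ∨ a ∈ H.cl (u '' (S \ {z}))}

theorem mem_crown_base (hC : IsQMClass C) (hH : H ∈ C) {S Z : Set I} (hZ : Z.Nonempty) {i : I}
    (hi : i ∈ S) : u i ∈ crown H u S Z := by
  obtain ⟨z, hz⟩ := hZ
  refine ⟨z, hz, ?_⟩
  by_cases h : i = z
  · exact Or.inl (by rw [h])
  · exact Or.inr (mem_span hC hH u ⟨hi, h⟩)

theorem crown_sub (hC : IsQMClass C) (hH : H ∈ C) {S Z : Set I} (hZ : Z ⊆ S) :
    crown H u S Z ⊆ H.cl (u '' S) := by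
  rintro a ⟨z, hz, rfl | h⟩
  · exact mem_span hC hH u (hZ hz)
  · exact span_mono hC hH u Set.sdiff_subset h

theorem swap_transfer (hC : IsQMClass C) (hH : H ∈ C) {S T : Set I} {z W y : I}
    {φ : Set (H.carrier × H.carrier)} (hφ : IsSwap H u S z W φ) (hz : z ∈ S) (hW : W ∈ S)
    (hyW : W ≠ y) (hzW : z ≠ W) (hT : T ⊆ S \ {W, y}) {a c : H.carrier}
    (ha : a ∈ H.cl (u '' T)) (hac : (a, c) ∈ φ) : c ∈ H.cl (u '' (S \ {y})) := by
  refine mem_cl_transfer hC hH hH hφ.pe hac ha ?_ ?_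
  · rw [hφ.dom]
    rintro _ ⟨i, hi, rfl⟩
    refine mem_span hC hH u ?_
    have := hT hi
    simp only [Set.mem_sdiff, Set.mem_insert_iff, Set.mem_singleton_iff] at this ⊢
    grind
  · rintro _ ⟨i, hi, rfl⟩ d hd
    have := hT hi
    simp only [Set.mem_sdiff, Set.mem_insert_iff, Set.mem_singleton_iff] at this
    by_cases hiz : i = z
    · subst hiz
      rw [pe_fun hφ.pe hd hφ.zW]
      exact mem_span hC hH u ⟨hW, hyW⟩
    · have h2 : u i ∈ H.cl (u '' (S \ {z, W})) := mem_span hC hH u (by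
        simp only [Set.mem_sdiff, Set.mem_insert_iff, Set.mem_singleton_iff]
        grind)
      rw [pe_fun hφ.pe hd (hφ.fix _ h2)]
      exact mem_span hC hH u (by
        simp only [Set.mem_sdiff, Set.mem_singleton_iff]
        grind)

theorem orth (hC : IsQMClass C) (hH : H ∈ C) {S Y : Set I} {w : I} (hS : S.Countable)
    (hw : w ∉ S) (hu : Ind H u (insert w S)) (hYS : Y ⊆ S) (hY : Y.Nonempty)
    (hinf : (S \ Y).Infinite) {σ : Set (H.carrier × H.carrier)}
    (hσ : IsPartialEmbedding (L := L) σ) (hfix : ∀ x ∈ crown H u S Y, (x, x) ∈ σ) :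
    IsPartialEmbedding (L := L)
      (prestr σ (H.cl (u '' S)) ∪ idOn (crown H u (insert w S) Y)) := by
  classical
  apply pe_of_finite
  intro t ht hfin
  have supp : ∀ p ∈ t, ∃ F ⊆ insert w S, F.Finite ∧
      ((p ∈ σ ∧ p.1 ∈ H.cl (u '' (F \ {w}))) ∨
        (p.1 = p.2 ∧ ∃ y ∈ Y, p.1 = u y ∨ p.1 ∈ H.cl (u '' (F \ {y})))) := by
    intro p hp
    rcases ht hp with h | ⟨h1, y, hy, h | h⟩
    · obtain ⟨F, hF, hFf, hpF⟩ := finChar_image (hC.pregeom H hH) u h.2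
      refine ⟨F, hF.trans (Set.subset_insert _ _), hFf, Or.inl ⟨h.1, ?_⟩⟩
      rwa [Set.sdiff_singleton_eq_self fun hh => hw (hF hh)]
    · exact ⟨∅, Set.empty_subset _, Set.finite_empty, Or.inr ⟨h1, y, hy, Or.inl h⟩⟩
    · obtain ⟨F, hF, hFf, hpF⟩ := finChar_image (hC.pregeom H hH) u h
      refine ⟨F, hF.trans Set.sdiff_subset, hFf, Or.inr ⟨h1, y, hy, Or.inr ?_⟩⟩
      rwa [Set.sdiff_singleton_eq_self fun hh => (hF hh).2 rfl]
  choose! F hF1 hF2 hF3 using supp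
  have hGfin : (⋃ p ∈ t, F p).Finite := hfin.biUnion hF2
  obtain ⟨W, hW, hWG⟩ := hinf.exists_notMem_finite hGfin
  have hWF : ∀ p ∈ t, W ∉ F p := fun p hp h => hWG (Set.mem_biUnion hp h)
  have hwW : w ≠ W := fun h => hw (h ▸ hW.1)
  obtain ⟨φ, hφ⟩ := swap_exists hC hH (hS.insert w) hu (Set.mem_insert _ _)
    (Set.mem_insert_of_mem w hW.1) hwW
  have hbase : ∀ i ∈ S, (u i, u i) ∈ σ := fun i hi => hfix _ (mem_crown_base hC hH hY hi)
  refine pe_mono (pe_comp hφ.pe (pe_comp hσ (pe_inv hφ.pe))) ?_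
  rintro ⟨a, b⟩ hab
  rcases hF3 _ hab with ⟨h1, h2⟩ | ⟨h1, y, hy, h2⟩
  · have hsub : F (a, b) \ {w} ⊆ (insert w S) \ {w, W} := by
      rintro i ⟨hi, hiw⟩
      refine ⟨hF1 _ hab hi, ?_⟩
      rintro (h | h)
      · exact hiw h
      · exact hWF _ hab (h ▸ hi)
    have hb := span_transfer hC hH hH hσ (T := F (a, b) \ {w}) (u := u) (u' := u) (by
      rintro i ⟨hi, hiw⟩
      exact hbase i ((hF1 _ hab hi).resolve_left hiw)) h1 h2
    exact ⟨a, hφ.fix a (span_mono hC hH u hsub h2), b, h1,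
      hφ.fix b (span_mono hC hH u hsub hb)⟩
  · obtain rfl : a = b := h1
    rcases h2 with h2 | h2
    · have hya : y ∈ insert w S \ {w, W} := by
        refine ⟨Set.mem_insert_of_mem _ (hYS hy), ?_⟩
        rintro (h | h)
        · exact hw (h ▸ hYS hy)
        · exact hW.2 (h ▸ hy)
      have := hφ.fix _ (mem_span hC hH u hya)
      simp only at h2
      subst h2
      exact ⟨u y, this, u y, hbase y (hYS hy), this⟩
    · have hyW : W ≠ y := fun h => hW.2 (h ▸ hy)
      have hsub : F (a, a) \ {y} ⊆ insert w S \ {W, y} := by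
        rintro i ⟨hi, hiw⟩
        refine ⟨hF1 _ hab hi, ?_⟩
        rintro (h | h)
        · exact hWF _ hab (h ▸ hi)
        · exact hiw h
      have hd : a ∈ pdom φ := by
        rw [hφ.dom]
        refine span_mono hC hH u (hsub.trans ?_) h2
        intro i hi
        exact ⟨hi.1, fun h => hi.2 (Or.inl h)⟩
      obtain ⟨c, hc⟩ := mem_pdom.1 hd
      have hcS : c ∈ H.cl (u '' S) := by
        have : c ∈ pimg φ := mem_pimg.2 ⟨a, hc⟩
        rw [hφ.img] at this
        refine span_mono hC hH u ?_ this
        rintro i ⟨hi, hi'⟩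
        exact hi.resolve_left hi'
      have hcy : c ∈ H.cl (u '' (S \ {y})) := by
        refine mem_cl_transfer hC hH hH hφ.pe hc h2 ?_ ?_
        · rw [hφ.dom]
          rintro _ ⟨i, hi, rfl⟩
          exact mem_span hC hH u ⟨(hsub hi).1, fun h => (hsub hi).2 (Or.inl h)⟩
        · rintro _ ⟨i, hi, rfl⟩ d hd
          by_cases hiw : i = w
          · subst hiw
            rw [pe_fun hφ.pe hd hφ.zW]
            exact mem_span hC hH u ⟨hW.1, hyW⟩
          · have hiS : i ∈ S := (hsub hi).1.resolve_left hiw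
            have : (u i, u i) ∈ φ := hφ.fix _ (mem_span hC hH u ⟨(hsub hi).1, by
              rintro (h | h)
              · exact hiw h
              · exact (hsub hi).2 (Or.inl h)⟩)
            rw [pe_fun hφ.pe hd this]
            exact mem_span hC hH u ⟨hiS, hi.2⟩
      exact ⟨c, hc, c, hfix c ⟨y, hy, Or.inr hcy⟩, hc⟩

theorem ulemma (hC : IsQMClass C) (hH : H ∈ C) {S Y F : Set I} {z W : I} (hS : S.Countable)
    (hu : Ind H u S) (hYS : Y ⊆ S) (hY : Y.Nonempty) (hz : z ∈ S) (hzY : z ∉ Y)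
    (hinf : (S \ (insert z Y)).Infinite) (hFS : F ⊆ S) {v : Set H.carrier}
    (hv : v ⊆ H.cl (u '' F)) (hW : W ∈ S) (hWY : W ∉ insert z Y) (hWF : W ∉ F)
    {φ : Set (H.carrier × H.carrier)} (hφ : IsSwap H u S z W φ)
    {σ : Set (H.carrier × H.carrier)} (hσ : IsPartialEmbedding (L := L) σ)
    (hi : pimg σ = H.cl (u '' S))
    (hfix : ∀ x ∈ crown H u S Y, (x, x) ∈ σ)
    (hvφ : ∀ x ∈ v, ∀ x', (x, x') ∈ φ → (x', x') ∈ σ) :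
    IsPartialEmbedding (L := L) (prestr σ v ∪ idOn (crown H u S (insert z Y))) := by
  have hzW : z ≠ W := fun h => hWY (h ▸ Set.mem_insert _ _)
  have hbase : ∀ i ∈ S, (u i, u i) ∈ σ := fun i hi => hfix _ (mem_crown_base hC hH hY hi)
  have hFW : F ⊆ S \ {W} := Set.subset_sdiff_singleton hFS hWF
  have hs1 : S \ {z, W} ⊆ S := Set.sdiff_subset
  have hu0 : ∀ i ∈ S, i ≠ z → i ≠ W → (u i, u i) ∈ φ := by
    intro i hi h1 h2
    exact hφ.fix _ (mem_span hC hH u ⟨hi, by rintro (h | h); exacts [h1 h, h2 h]⟩)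
  set σ' := pcomp φ (pcomp σ (pinv φ)) with hσ'
  have hσ'pe : IsPartialEmbedding (L := L) σ' := pe_comp hφ.pe (pe_comp hσ (pe_inv hφ.pe))
  have key : ∀ x x', (x, x') ∈ φ → (x', x') ∈ σ → (x, x) ∈ σ' := by
    intro x x' h1 h2
    exact ⟨x', h1, x', h2, h1⟩
  have hins : insert W (S \ {W}) = S := by
    rw [Set.insert_sdiff_singleton, Set.insert_eq_of_mem hW]
  have hα := orth hC hH (S := S \ {W}) (Y := insert z Y) (w := W) (u := u)
    (σ := pcomp (pinv σ') σ) (hS.mono Set.sdiff_subset) (fun h => h.2 rfl)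
    (by rwa [hins])
    (by
      intro i hi
      refine ⟨?_, fun h => hWY (h ▸ hi)⟩
      rcases hi with rfl | hi
      · exact hz
      · exact hYS hi)
    ⟨z, Set.mem_insert _ _⟩
    (by
      have := hinf.sdiff (Set.finite_singleton W)
      refine this.mono ?_
      rintro i ⟨⟨h1, h2⟩, h3⟩
      exact ⟨⟨h1, h3⟩, h2⟩)
    (pe_comp (pe_inv hσ'pe) hσ)
    (by
      rintro x ⟨y, hy, rfl | hx⟩
      · rcases hy with rfl | hy
        · exact ⟨u y, key _ _ hφ.zW (hbase W hW), hbase y hz⟩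
        · have hyz : y ≠ z := fun h => hzY (h ▸ hy)
          have hyW : y ≠ W := fun h => hWY (Or.inr (h ▸ hy))
          exact ⟨u y, key _ _ (hu0 y (hYS hy) hyz hyW) (hbase y (hYS hy)), hbase y (hYS hy)⟩
      · rcases hy with rfl | hy
        · have hx1 : x ∈ H.cl (u '' (S \ {y, W})) := by
            refine span_mono hC hH u ?_ hx
            rintro i ⟨⟨h1, h2⟩, h3⟩
            exact ⟨h1, by rintro (h | h); exacts [h3 h, h2 h]⟩
          have : x ∈ pimg σ := by
            rw [hi]; exact span_mono hC hH u hs1 hx1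
          obtain ⟨c, hc⟩ := mem_pimg.1 this
          have hc1 := span_transfer' hC hH hH hσ (T := S \ {y, W}) (u := u) (u' := u)
            (fun i hi => hbase i hi.1) hc hx1
          exact ⟨c, ⟨c, hφ.fix c hc1, x, hc, hφ.fix x hx1⟩, hc⟩
        · have hyW : W ≠ y := fun h => hWY (Or.inr (h ▸ hy))
          have hxy : x ∈ H.cl (u '' (S \ {y})) := by
            refine span_mono hC hH u ?_ hx
            rintro i ⟨⟨h1, h2⟩, h3⟩
            exact ⟨h1, h3⟩
          have : x ∈ pdom φ := by
            rw [hφ.dom]; exact span_mono hC hH u Set.sdiff_subset hx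
          obtain ⟨x', hx'⟩ := mem_pdom.1 this
          have hx'2 := swap_transfer hC hH hφ hz hW hyW hzW (T := (S \ {W}) \ {y}) (by
            rintro i ⟨⟨h1, h2⟩, h3⟩
            exact ⟨h1, by rintro (h | h); exacts [h2 h, h3 h]⟩) hx hx'
          exact ⟨x, key _ _ hx' (hfix _ ⟨y, hy, Or.inr hx'2⟩), hfix _ ⟨y, hy, Or.inr hxy⟩⟩)
  rw [hins] at hα
  refine pe_mono hα ?_
  rintro ⟨x, b⟩ (⟨h1, h2⟩ | h)
  · left
    have hx : x ∈ H.cl (u '' (S \ {W})) := span_mono hC hH u hFW (hv h2)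
    refine ⟨⟨x, ?_, h1⟩, hx⟩
    have : x ∈ pdom φ := by rw [hφ.dom]; exact hx
    obtain ⟨x', hx'⟩ := mem_pdom.1 this
    exact key _ _ hx' (hvφ x h2 x' hx')
  · exact Or.inr h

end Crown

/-! ### Extending crown maps -/

section CrownMaps

variable {C : Set (QMObj.{u} L)} {H H' : QMObj.{u} L}
variable {I : Type u} {u : I → H.carrier} {u' : I → H'.carrier}

/-- Maps between crowns. -/
structure IsCrown (H H' : QMObj.{u} L) (u : I → H.carrier) (u' : I → H'.carrier) (S Z : Set I)
    (f : Set (H.carrier × H'.carrier)) : Prop where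
  pe : IsPartialEmbedding (L := L) f
  dom : pdom f = crown H u S Z
  img : pimg f = crown H' u' S Z
  base : ∀ i ∈ S, (u i, u' i) ∈ f

theorem IsCrown.inv {S Z : Set I} {f : Set (H.carrier × H'.carrier)}
    (h : IsCrown H H' u u' S Z f) : IsCrown H' H u' u S Z (pinv f) :=
  ⟨pe_inv h.pe, by rw [pdom_pinv, h.img], by rw [pimg_pinv, h.dom], h.base⟩

theorem crown_transfer (hC : IsQMClass C) (hH : H ∈ C) (hH' : H' ∈ C)
    {p : Set (H.carrier × H'.carrier)} (hp : IsPartialEmbedding (L := L) p) {S Z : Set I}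
    (hZ : Z ⊆ S) (hb : ∀ i ∈ S, (u i, u' i) ∈ p) {a : H.carrier} {b : H'.carrier}
    (hab : (a, b) ∈ p) (ha : a ∈ crown H u S Z) : b ∈ crown H' u' S Z := by
  obtain ⟨z, hz, rfl | h⟩ := ha
  · exact ⟨z, hz, Or.inl (pe_fun hp hab (hb z (hZ hz)))⟩
  · exact ⟨z, hz, Or.inr (span_transfer hC hH hH' hp (fun i hi => hb i hi.1) hab h)⟩

theorem crown_transfer' (hC : IsQMClass C) (hH : H ∈ C) (hH' : H' ∈ C)
    {p : Set (H.carrier × H'.carrier)} (hp : IsPartialEmbedding (L := L) p) {S Z : Set I}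
    (hZ : Z ⊆ S) (hb : ∀ i ∈ S, (u i, u' i) ∈ p) {a : H.carrier} {b : H'.carrier}
    (hab : (a, b) ∈ p) (hb' : b ∈ crown H' u' S Z) : a ∈ crown H u S Z :=
  crown_transfer hC hH' hH (pe_inv hp) (p := pinv p) (u := u') (u' := u) hZ hb hab hb'

theorem crown_mono {S Y Z : Set I} (h : Y ⊆ Z) : crown H u S Y ⊆ crown H u S Z := by
  rintro a ⟨z, hz, h'⟩
  exact ⟨z, h hz, h'⟩

theorem finite_support (hC : IsQMClass C) (hH : H ∈ C) {S : Set I} {v : Set H.carrier}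
    (hv : v.Finite) (hvS : v ⊆ H.cl (u '' S)) :
    ∃ F ⊆ S, F.Finite ∧ v ⊆ H.cl (u '' F) := by
  have : ∀ x ∈ v, ∃ F ⊆ S, F.Finite ∧ x ∈ H.cl (u '' F) :=
    fun x hx => finChar_image (hC.pregeom H hH) u (hvS hx)
  choose! F h1 h2 h3 using this
  refine ⟨⋃ x ∈ v, F x, Set.iUnion₂_subset h1, hv.biUnion h2, ?_⟩
  intro x hx
  exact span_mono hC hH u (Set.subset_biUnion_of_mem (u := F) hx) (h3 x hx)

theorem prestr_finite {A B : Type u} [L.Structure A] [L.Structure B] {p : Set (A × B)}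
    (hp : IsPartialEmbedding (L := L) p) {v : Set A} (hv : v.Finite) : (prestr p v).Finite := by
  have : prestr p v ⊆ ⋃ x ∈ v, {q | q ∈ p ∧ q.1 = x} := by
    rintro ⟨a, b⟩ ⟨h1, h2⟩
    exact Set.mem_biUnion h2 ⟨h1, rfl⟩
  refine (hv.biUnion fun x _ => Set.Subsingleton.finite ?_).subset this
  rintro ⟨a, b⟩ ⟨h1, h2⟩ ⟨a', b'⟩ ⟨h1', h2'⟩
  simp only at h2 h2'
  subst h2
  subst h2'
  rw [pe_fun hp h1 h1']

theorem pimage_finite {A B : Type u} [L.Structure A] [L.Structure B] {p : Set (A × B)}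
    (hp : IsPartialEmbedding (L := L) p) {v : Set A} (hv : v.Finite) : (pimage p v).Finite := by
  refine ((prestr_finite hp hv).image Prod.snd).subset ?_
  rintro b ⟨a, ha, hab⟩
  exact ⟨(a, b), ⟨hab, ha⟩, rfl⟩

theorem pinv_finite {A B : Type u} {t : Set (A × B)} (ht : t.Finite) : (pinv t).Finite := by
  have : pinv t = Prod.swap '' t := by
    rw [Set.image_swap_eq_preimage_swap]; rfl
  rw [this]; exact ht.image _

/-- The extension property for crowns over `Z`. -/
def ExtP (C : Set (QMObj.{u} L)) (Z : Set I) : Prop :=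
  ∀ H ∈ C, ∀ H' ∈ C, ∀ (u : I → H.carrier) (u' : I → H'.carrier) (S : Set I), S.Countable →
    Ind H u S → Ind H' u' S → Z ⊆ S → (S \ Z).Infinite →
    ∀ f s : Set (H.carrier × H'.carrier), IsCrown H H' u u' S Z f → s.Finite →
      s ⊆ H.cl (u '' S) ×ˢ H'.cl (u' '' S) → IsPartialEmbedding (L := L) (f ∪ s) →
      ∀ a ∈ H.cl (u '' S), ∃ a', IsPartialEmbedding (L := L) (f ∪ s ∪ {(a, a')})

theorem full_of_ext (hC : IsQMClass C) {Z : Set I} (hE : ExtP C Z) (hH : H ∈ C) (hH' : H' ∈ C)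
    {S : Set I} (hS : S.Countable) (hu : Ind H u S) (hu' : Ind H' u' S) (hZ : Z ⊆ S)
    (hinf : (S \ Z).Infinite) {f s : Set (H.carrier × H'.carrier)}
    (hf : IsCrown H H' u u' S Z f) (hs : s.Finite)
    (hsS : s ⊆ H.cl (u '' S) ×ˢ H'.cl (u' '' S)) (hp : IsPartialEmbedding (L := L) (f ∪ s)) :
    ∃ q, IsIso H H' u u' S q ∧ f ∪ s ⊆ q := by
  have hfS : f ⊆ H.cl (u '' S) ×ˢ H'.cl (u' '' S) := by
    rintro ⟨a, b⟩ hab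
    have h1 : a ∈ pdom f := mem_pdom.2 ⟨b, hab⟩
    have h2 : b ∈ pimg f := mem_pimg.2 ⟨a, hab⟩
    rw [hf.dom] at h1
    rw [hf.img] at h2
    exact ⟨crown_sub hC hH hZ h1, crown_sub hC hH' hZ h2⟩
  obtain ⟨q, h1, h2, h3, h4⟩ := back_and_forth (span_countable hC hH hS u)
    (span_countable hC hH' hS u') hp (Set.union_subset hfS hsS) (by
      intro t ht htS hpt a ha
      rw [Set.union_assoc] at hpt
      obtain ⟨a', ha'⟩ := hE H hH H' hH' u u' S hS hu hu' hZ hinf f (s ∪ t) hf (hs.union ht)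
        (Set.union_subset hsS htS) hpt a ha
      refine ⟨a', ?_, by rwa [← Set.union_assoc] at ha'⟩
      exact span_transfer hC hH hH' ha' (fun i hi => Or.inl (Or.inl (hf.base i hi)))
        (Or.inr rfl) ha) (by
      intro t ht htS hpt a ha
      rw [Set.union_assoc] at hpt
      obtain ⟨a', ha'⟩ := hE H' hH' H hH u' u S hS hu' hu hZ hinf (pinv f) (pinv (s ∪ t)) hf.inv
        (pinv_finite (hs.union ht))
        (fun x hx => by
          have := Set.union_subset hsS htS hx
          exact ⟨this.2, this.1⟩) (pe_inv hpt) a ha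
      refine ⟨a', ?_, ?_⟩
      · exact span_transfer hC hH' hH ha' (fun i hi => Or.inl (Or.inl (hf.base i hi)))
          (Or.inr rfl) ha
      · refine pe_mono (pe_inv ha') ?_
        rintro ⟨x, y⟩ hxy
        rcases hxy with (hxy | hxy) | hxy
        · rcases hxy with hxy | hxy
          · exact Or.inl (Or.inl hxy)
          · exact Or.inl (Or.inr (Or.inl hxy))
        · exact Or.inl (Or.inr (Or.inr hxy))
        · refine Or.inr ?_
          cases hxy; rfl)
  exact ⟨q, ⟨h2, h3, h4, fun i hi => h1 (Or.inl (hf.base i hi))⟩, h1⟩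

theorem prestr_span (hC : IsQMClass C) (hH : H ∈ C) (hH' : H' ∈ C)
    {f : Set (H.carrier × H'.carrier)} (hf : IsPartialEmbedding (L := L) f) {T : Set I}
    (hb : ∀ i ∈ T, (u i, u' i) ∈ f) (h1 : H.cl (u '' T) ⊆ pdom f)
    (h2 : H'.cl (u' '' T) ⊆ pimg f) :
    IsIso H H' u u' T (prestr f (H.cl (u '' T))) := by
  refine ⟨pe_mono hf fun x hx => hx.1, ?_, ?_, fun i hi => ⟨hb i hi, mem_span hC hH u hi⟩⟩
  · ext a
    constructor
    · intro ha
      obtain ⟨b, hb⟩ := mem_pdom.1 ha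
      exact hb.2
    · intro ha
      obtain ⟨b, hb⟩ := mem_pdom.1 (h1 ha)
      exact mem_pdom.2 ⟨b, hb, ha⟩
  · ext b
    constructor
    · intro ha
      obtain ⟨a, hab⟩ := mem_pimg.1 ha
      exact span_transfer hC hH hH' hf hb hab.1 hab.2
    · intro hb'
      obtain ⟨a, hab⟩ := mem_pimg.1 (h2 hb')
      exact mem_pimg.2 ⟨a, hab, span_transfer' hC hH hH' hf hb hab hb'⟩

theorem ext_singleton (hC : IsQMClass C) (z : I) : ExtP C ({z} : Set I) := by
  intro H hH H' hH' u u' S hS hu hu' hZ hinf f s hf hs hsS hp a ha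
  have hzS : z ∈ S := hZ rfl
  have hT : (S \ {z}).Countable := hS.mono Set.sdiff_subset
  have hg := prestr_span hC hH hH' hf.pe (T := S \ {z}) (fun i hi => hf.base i hi.1)
    (by rw [hf.dom]; exact fun x hx => ⟨z, rfl, Or.inr hx⟩)
    (by rw [hf.img]; exact fun x hx => ⟨z, rfl, Or.inr hx⟩)
  set g := prestr f (H.cl (u '' (S \ {z}))) with hgdef
  have e : g ∪ ({(u z, u' z)} ∪ s) = f ∪ s := by
    rw [← Set.union_assoc]
    congr 1
    apply Set.Subset.antisymm
    · refine Set.union_subset (fun x hx => hx.1) ?_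
      rintro _ rfl
      exact hf.base z hzS
    · rintro ⟨x, y⟩ hxy
      have : x ∈ pdom f := mem_pdom.2 ⟨y, hxy⟩
      rw [hf.dom] at this
      obtain ⟨_, rfl, rfl | h⟩ := this
      · right
        rw [pe_fun hf.pe hxy (hf.base _ hzS)]; rfl
      · exact Or.inl ⟨hxy, h⟩
  obtain ⟨a', ha'⟩ := hC.homogeneity₂ H hH H' hH' g ({(u z, u' z)} ∪ s)
    (by rw [hg.dom]; exact span_ccoe hC hH hT u)
    (by rw [hg.img]; exact span_ccoe hC hH' hT u') hg.pe
    (((Set.finite_singleton _).union hs).image _) (by rwa [e]) a (by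
      refine (hC.pregeom H hH).mono ?_ ha
      rintro _ ⟨i, hi, rfl⟩
      by_cases h : i = z
      · subst h
        exact Or.inl (mem_pdom.2 ⟨u' i, Or.inl rfl⟩)
      · exact Or.inr (mem_pdom.2 ⟨_, hg.base i ⟨hi, h⟩⟩))
  exact ⟨a', by rwa [e] at ha'⟩

theorem restr_crown (hC : IsQMClass C) (hH : H ∈ C) (hH' : H' ∈ C) {S Y Z : Set I}
    (hYZ : Y ⊆ Z) (hZ : Z ⊆ S) (hY : Y.Nonempty) {f : Set (H.carrier × H'.carrier)}
    (hf : IsCrown H H' u u' S Z f) :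
    IsCrown H H' u u' S Y (prestr f (crown H u S Y)) := by
  refine ⟨pe_mono hf.pe fun x hx => hx.1, ?_, ?_,
    fun i hi => ⟨hf.base i hi, mem_crown_base hC hH hY hi⟩⟩
  · ext a
    constructor
    · intro ha
      obtain ⟨b, hb⟩ := mem_pdom.1 ha
      exact hb.2
    · intro ha
      have : a ∈ pdom f := by rw [hf.dom]; exact crown_mono hYZ ha
      obtain ⟨b, hb⟩ := mem_pdom.1 this
      exact mem_pdom.2 ⟨b, hb, ha⟩
  · ext b
    constructor
    · intro ha
      obtain ⟨a, hab⟩ := mem_pimg.1 ha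
      exact crown_transfer hC hH hH' hf.pe (hYZ.trans hZ) hf.base hab.1 hab.2
    · intro hb'
      have : b ∈ pimg f := by rw [hf.img]; exact crown_mono hYZ hb'
      obtain ⟨a, hab⟩ := mem_pimg.1 this
      exact mem_pimg.2 ⟨a, hab,
        crown_transfer' hC hH hH' hf.pe (hYZ.trans hZ) hf.base hab hb'⟩

theorem ext_insert (hC : IsQMClass C) {z : I} {Y : Set I} (hzY : z ∉ Y) (hY : Y.Nonempty)
    (hE : ExtP C Y) : ExtP C (insert z Y) := by
  intro H hH H' hH' u u' S hS hu hu' hZ hinf f s hf hs hsS hp a ha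
  have hzS : z ∈ S := hZ (Set.mem_insert _ _)
  have hYS : Y ⊆ S := (Set.subset_insert _ _).trans hZ
  have hinfY : (S \ Y).Infinite := hinf.mono fun i hi => ⟨hi.1, fun h => hi.2 (Or.inr h)⟩
  set v : Set H.carrier := pdom s ∪ {a} with hv
  have hvfin : v.Finite := (hs.image _).union (Set.finite_singleton a)
  have hvS : v ⊆ H.cl (u '' S) := by
    rintro x (hx | rfl)
    · obtain ⟨y, hy⟩ := mem_pdom.1 hx
      exact (hsS hy).1
    · exact ha
  obtain ⟨F, hFS, hFfin, hvF⟩ := finite_support hC hH hvfin hvS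
  obtain ⟨W, hW, hWF⟩ := hinf.exists_notMem_finite hFfin
  have hzW : z ≠ W := fun h => hW.2 (Or.inl h.symm)
  obtain ⟨φ, hφ⟩ := swap_exists hC hH hS hu hzS hW.1 hzW
  have hf1 := restr_crown hC hH hH' (Set.subset_insert z Y) hZ hY hf
  set f1 := prestr f (crown H u S Y) with hf1def
  have hf1f : f1 ⊆ f := fun x hx => hx.1
  have hfS : f ⊆ H.cl (u '' S) ×ˢ H'.cl (u' '' S) := by
    rintro ⟨x, b⟩ hab
    have h1 : x ∈ pdom f := mem_pdom.2 ⟨b, hab⟩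
    have h2 : b ∈ pimg f := mem_pimg.2 ⟨x, hab⟩
    rw [hf.dom] at h1
    rw [hf.img] at h2
    exact ⟨crown_sub hC hH hZ h1, crown_sub hC hH' hZ h2⟩
  set fW := prestr f (pimage φ v) with hfW
  have hfWf : fW ⊆ f := fun x hx => hx.1
  have hfWfin : fW.Finite := prestr_finite hf.pe (pimage_finite hφ.pe hvfin)
  have hs1 : (s ∪ fW).Finite := hs.union hfWfin
  have hs1S : s ∪ fW ⊆ H.cl (u '' S) ×ˢ H'.cl (u' '' S) :=
    Set.union_subset hsS (hfWf.trans hfS)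
  have hp1 : IsPartialEmbedding (L := L) (f1 ∪ (s ∪ fW)) := by
    refine pe_mono hp (Set.union_subset (hf1f.trans Set.subset_union_left) (Set.union_subset
      Set.subset_union_right (hfWf.trans Set.subset_union_left)))
  obtain ⟨a', ha'⟩ := hE H hH H' hH' u u' S hS hu hu' hYS hinfY f1 (s ∪ fW) hf1 hs1 hs1S hp1 a ha
  have ha'S : a' ∈ H'.cl (u' '' S) :=
    span_transfer hC hH hH' ha' (fun i hi => Or.inl (Or.inl (hf1.base i hi))) (Or.inr rfl) ha
  rw [Set.union_assoc] at ha'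
  obtain ⟨ψ, hψ, hψsub⟩ := full_of_ext hC hE hH hH' hS hu hu' hYS hinfY hf1
    (hs1.union (Set.finite_singleton (a, a')))
    (Set.union_subset hs1S (Set.singleton_subset_iff.2 ⟨ha, ha'S⟩)) ha'
  refine ⟨a', pe_of_finite ?_⟩
  intro t ht htfin
  have htf : (t ∩ f).Finite := htfin.subset Set.inter_subset_left
  obtain ⟨ψ2, hψ2, hψ2sub⟩ := full_of_ext hC hE hH hH' hS hu hu' hYS hinfY hf1
    (s := fW ∪ (t ∩ f)) (hfWfin.union htf)
    (Set.union_subset (hfWf.trans hfS) (Set.inter_subset_right.trans hfS))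
    (pe_mono hf.pe (Set.union_subset hf1f (Set.union_subset hfWf Set.inter_subset_right)))
  set σ := pcomp ψ (pinv ψ2) with hσ
  have hσpe : IsPartialEmbedding (L := L) σ := pe_comp hψ.pe (pe_inv hψ2.pe)
  have hψ2img : ∀ y ∈ H'.cl (u' '' S), ∃ x, (x, y) ∈ ψ2 := by
    intro y hy
    rw [← hψ2.img] at hy
    exact mem_pimg.1 hy
  have hσimg : pimg σ = H.cl (u '' S) := by
    ext x
    constructor
    · intro hx
      obtain ⟨x0, y, h1, h2⟩ := mem_pimg.1 hx
      rw [← hψ2.dom]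
      exact mem_pdom.2 ⟨y, h2⟩
    · intro hx
      rw [← hψ2.dom] at hx
      obtain ⟨y, hy⟩ := mem_pdom.1 hx
      have : y ∈ pimg ψ := by rw [hψ.img, ← hψ2.img]; exact mem_pimg.2 ⟨x, hy⟩
      obtain ⟨x0, hx0⟩ := mem_pimg.1 this
      exact mem_pimg.2 ⟨x0, y, hx0, hy⟩
  have hU := ulemma hC hH hS hu hYS hY hzS hzY hinf hFS hvF hW.1 hW.2 hWF hφ hσpe hσimg
    (by
      intro x hx
      have : x ∈ pdom f1 := by rw [hf1.dom]; exact hx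
      obtain ⟨y, hy⟩ := mem_pdom.1 this
      exact ⟨y, hψsub (Or.inl hy), hψ2sub (Or.inl hy)⟩)
    (by
      intro x hx x' hxx'
      have h1 : x' ∈ pimg φ := mem_pimg.2 ⟨x, hxx'⟩
      rw [hφ.img] at h1
      have : x' ∈ pdom f := by rw [hf.dom]; exact ⟨z, Or.inl rfl, Or.inr h1⟩
      obtain ⟨y, hy⟩ := mem_pdom.1 this
      have hyW : (x', y) ∈ fW := ⟨hy, x, hx, hxx'⟩
      exact ⟨y, hψsub (Or.inr (Or.inl (Or.inr hyW))), hψ2sub (Or.inr (Or.inl hyW))⟩)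
  refine pe_mono (pe_comp hU hψ2.pe) ?_
  have aux : ∀ x y, x ∈ v → (x, y) ∈ ψ → y ∈ H'.cl (u' '' S) → (x, y) ∈
      pcomp (prestr σ v ∪ idOn (crown H u S (insert z Y))) ψ2 := by
    intro x y hx hxy hy
    obtain ⟨x2, hx2⟩ := hψ2img y hy
    exact ⟨x2, Or.inl ⟨⟨y, hxy, hx2⟩, hx⟩, hx2⟩
  rintro ⟨x, y⟩ hxy
  rcases ht hxy with (h | h) | h
  · refine ⟨x, Or.inr ⟨rfl, ?_⟩, hψ2sub (Or.inr (Or.inr ⟨hxy, h⟩))⟩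
    rw [← hf.dom]
    exact mem_pdom.2 ⟨y, h⟩
  · exact aux x y (Or.inl (mem_pdom.2 ⟨y, h⟩)) (hψsub (Or.inr (Or.inl (Or.inl h)))) (hsS h).2
  · cases h
    exact aux a a' (Or.inr rfl) (hψsub (Or.inr (Or.inr rfl))) ha'S

theorem ext_all (hC : IsQMClass C) (Z : Finset I) (hZ : Z.Nonempty) : ExtP C (Z : Set I) := by
  classical
  induction hZ using Finset.Nonempty.cons_induction with
  | singleton z => simpa using ext_singleton hC z
  | cons z Y hzY hY ih =>
    rw [Finset.coe_cons]
    exact ext_insert hC (by simpa using hzY) (by simpa using hY) ih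

end CrownMaps

/-! ### Amalgamating crowns -/

section Amalgam

variable {C : Set (QMObj.{u} L)} {H H' : QMObj.{u} L}
variable {I : Type u} {u : I → H.carrier} {u' : I → H'.carrier}

/-- The union of a family of maps on the faces of a crown. -/
def cmap (u : I → H.carrier) (u' : I → H'.carrier) (g : I → Set (H.carrier × H'.carrier))
    (Z : Set I) : Set (H.carrier × H'.carrier) :=
  {p | ∃ z ∈ Z, p ∈ g z ∨ p = (u z, u' z)}

theorem cmap_isCrown {S Z : Set I}
    {g : I → Set (H.carrier × H'.carrier)} (hZne : Z.Nonempty)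
    (hg : ∀ z ∈ Z, IsIso H H' u u' (S \ {z}) (g z))
    (hp : IsPartialEmbedding (L := L) (cmap u u' g Z)) :
    IsCrown H H' u u' S Z (cmap u u' g Z) := by
  refine ⟨hp, ?_, ?_, ?_⟩
  · ext a
    constructor
    · intro ha
      obtain ⟨b, z, hz, h | h⟩ := mem_pdom.1 ha
      · refine ⟨z, hz, Or.inr ?_⟩
        rw [← (hg z hz).dom]
        exact mem_pdom.2 ⟨b, h⟩
      · exact ⟨z, hz, Or.inl (congrArg Prod.fst h)⟩
    · rintro ⟨z, hz, rfl | h⟩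
      · exact mem_pdom.2 ⟨u' z, z, hz, Or.inr rfl⟩
      · rw [← (hg z hz).dom] at h
        obtain ⟨b, hb⟩ := mem_pdom.1 h
        exact mem_pdom.2 ⟨b, z, hz, Or.inl hb⟩
  · ext a
    constructor
    · intro ha
      obtain ⟨b, z, hz, h | h⟩ := mem_pimg.1 ha
      · refine ⟨z, hz, Or.inr ?_⟩
        rw [← (hg z hz).img]
        exact mem_pimg.2 ⟨b, h⟩
      · exact ⟨z, hz, Or.inl (congrArg Prod.snd h)⟩
    · rintro ⟨z, hz, rfl | h⟩
      · exact mem_pimg.2 ⟨u z, z, hz, Or.inr rfl⟩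
      · rw [← (hg z hz).img] at h
        obtain ⟨b, hb⟩ := mem_pimg.1 h
        exact mem_pimg.2 ⟨b, z, hz, Or.inl hb⟩
  · intro i hi
    obtain ⟨z, hz⟩ := hZne
    by_cases h : i = z
    · subst h
      exact ⟨i, hz, Or.inr rfl⟩
    · exact ⟨z, hz, Or.inl ((hg z hz).base i ⟨hi, h⟩)⟩

theorem cmap_full (hC : IsQMClass C) (hH : H ∈ C) (hH' : H' ∈ C) {S : Set I} {Z : Finset I}
    (hS : S.Countable) (hu : Ind H u S) (hu' : Ind H' u' S) (hZ : (Z : Set I) ⊆ S)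
    (hinf : (S \ (Z : Set I)).Infinite) (hZne : Z.Nonempty)
    {g : I → Set (H.carrier × H'.carrier)}
    (hg : ∀ z ∈ (Z : Set I), IsIso H H' u u' (S \ {z}) (g z))
    (hp : IsPartialEmbedding (L := L) (cmap u u' g Z)) :
    ∃ q, IsIso H H' u u' S q ∧ cmap u u' g Z ⊆ q := by
  obtain ⟨q, h1, h2⟩ := full_of_ext hC (ext_all hC Z hZne) hH hH' hS hu hu' hZ hinf
    (cmap_isCrown (by simpa using hZne) hg hp) Set.finite_empty (Set.empty_subset _)
    (by simpa using hp)
  exact ⟨q, h1, Set.subset_union_left.trans h2⟩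

theorem cmap_pe (hC : IsQMClass C) (hH : H ∈ C) (hH' : H' ∈ C) {S : Set I} (Z : Finset I)
    (hS : S.Countable) (hu : Ind H u S) (hu' : Ind H' u' S) (hZne : Z.Nonempty)
    (g : I → Set (H.carrier × H'.carrier)) : (Z : Set I) ⊆ S →
    (S \ (Z : Set I)).Infinite →
    (∀ z ∈ (Z : Set I), IsIso H H' u u' (S \ {z}) (g z)) →
    (∀ z ∈ (Z : Set I), ∀ z' ∈ (Z : Set I), ∀ a b, (a, b) ∈ g z →
      a ∈ H.cl (u '' (S \ {z'})) → (a, b) ∈ g z') →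
    IsPartialEmbedding (L := L) (cmap u u' g Z) := by
  classical
  induction hZne using Finset.Nonempty.cons_induction with
  | singleton z =>
    intro hZ hinf hg hag
    have hzS : z ∈ S := hZ (by simp)
    have hgz := hg z (by simp)
    have hT : (S \ {z}).Countable := hS.mono Set.sdiff_subset
    have := hC.homogeneity₁ H hH H' hH' (g z)
      (by rw [hgz.dom]; exact span_ccoe hC hH hT u)
      (by rw [hgz.img]; exact span_ccoe hC hH' hT u') hgz.pe (u z) (u' z)
      (by rw [hgz.dom, (hC.pregeom H hH).idem]; exact hu z hzS)
      (by rw [hgz.img, (hC.pregeom H' hH').idem]; exact hu' z hzS)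
    refine pe_mono this ?_
    rintro p ⟨z', hz', h⟩
    obtain rfl : z' = z := by simpa using hz'
    exact h
  | cons z Y hzY hY ih =>
    intro hZ hinf hg hag
    rw [Finset.coe_cons] at hZ hinf hg hag ⊢
    have hzS : z ∈ S := hZ (Set.mem_insert _ _)
    have hYS : (Y : Set I) ⊆ S := (Set.subset_insert _ _).trans hZ
    have hzY' : z ∉ (Y : Set I) := by simpa using hzY
    have hinfY : (S \ (Y : Set I)).Infinite :=
      hinf.mono fun i hi => ⟨hi.1, fun h => hi.2 (Or.inr h)⟩
    have hgY : ∀ y ∈ (Y : Set I), IsIso H H' u u' (S \ {y}) (g y) :=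
      fun y hy => hg y (Or.inr hy)
    have hpeY := ih hYS hinfY hgY (fun y hy y' hy' => hag y (Or.inr hy) y' (Or.inr hy'))
    have hYne : (Y : Set I).Nonempty := by simpa using hY
    have hcr := cmap_isCrown hYne hgY hpeY
    obtain ⟨ψ, hψ, hψsub⟩ := cmap_full hC hH hH' hS hu hu' hYS hinfY hY hgY hpeY
    have hgz := hg z (Or.inl rfl)
    have hins : insert z (S \ {z}) = S := by
      rw [Set.insert_sdiff_singleton, Set.insert_eq_of_mem hzS]
    have ho := orth hC hH (S := S \ {z}) (Y := (Y : Set I)) (w := z) (u := u)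
      (σ := pcomp (g z) (pinv ψ)) (hS.mono Set.sdiff_subset) (fun h => h.2 rfl)
      (by rwa [hins]) (fun i hi => ⟨hYS hi, fun h => hzY' (h ▸ hi)⟩) hYne
      (hinf.mono fun i hi => ⟨⟨hi.1, fun h => hi.2 (Or.inl h)⟩, fun h => hi.2 (Or.inr h)⟩)
      (pe_comp hgz.pe (pe_inv hψ.pe))
      (by
        rintro x ⟨y, hy, rfl | hx⟩
        · exact ⟨u' y, hgz.base y ⟨hYS hy, fun h => hzY' (h ▸ hy)⟩, hψ.base y (hYS hy)⟩
        · have h1 : x ∈ pdom (g z) := by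
            rw [hgz.dom]; exact span_mono hC hH u Set.sdiff_subset hx
          obtain ⟨b, hb⟩ := mem_pdom.1 h1
          refine ⟨b, hb, hψsub ⟨y, hy, Or.inl (hag z (Or.inl rfl) y (Or.inr hy) x b hb ?_)⟩⟩
          refine span_mono hC hH u ?_ hx
          exact fun i hi => ⟨hi.1.1, hi.2⟩)
    rw [hins] at ho
    refine pe_mono (pe_comp ho hψ.pe) ?_
    rintro ⟨a, b⟩ ⟨z', hz', h⟩
    rcases hz' with rfl | hz'
    · rcases h with h | h
      · have ha : a ∈ H.cl (u '' (S \ {z'})) := by rw [← hgz.dom]; exact mem_pdom.2 ⟨b, h⟩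
        have hb : b ∈ pimg ψ := by
          rw [hψ.img]
          refine span_mono hC hH' u' (S := S \ {z'}) Set.sdiff_subset ?_
          rw [← hgz.img]; exact mem_pimg.2 ⟨a, h⟩
        obtain ⟨c, hc⟩ := mem_pimg.1 hb
        exact ⟨c, Or.inl ⟨⟨b, h, hc⟩, ha⟩, hc⟩
      · cases h
        exact ⟨u z', Or.inr ⟨rfl, mem_crown_base hC hH hYne hzS⟩, hψ.base z' hzS⟩
    · have hab : (a, b) ∈ cmap u u' g (Y : Set I) := ⟨z', hz', h⟩
      refine ⟨a, Or.inr ⟨rfl, ?_⟩, hψsub hab⟩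
      rw [← hcr.dom]
      exact mem_pdom.2 ⟨b, hab⟩

theorem span_inter (hC : IsQMClass C) (hH : H ∈ C) {S : Set I} (hu : Ind H u S) {z z' : I}
    (hz' : z' ∈ S) (hzz : z ≠ z') {a : H.carrier}
    (h1 : a ∈ H.cl (u '' (S \ {z}))) (h2 : a ∈ H.cl (u '' (S \ {z'}))) :
    a ∈ H.cl (u '' (S \ {z, z'})) := by
  by_contra hcon
  have hpg := hC.pregeom H hH
  have h3 : a ∈ H.cl (u '' (S \ {z, z'}) ∪ {u z'}) := by
    refine hpg.mono ?_ h1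
    rintro _ ⟨i, hi, rfl⟩
    by_cases h : i = z'
    · exact Or.inr (by rw [h]; rfl)
    · exact Or.inl ⟨i, ⟨hi.1, by rintro (h' | h'); exacts [hi.2 h', h h']⟩, rfl⟩
  have h4 := hpg.exchange _ _ _ h3 hcon
  refine hu z' hz' (cl_subset hpg ?_ h4)
  rintro x (⟨i, hi, rfl⟩ | rfl)
  · exact mem_span hC hH u ⟨hi.1, fun h => hi.2 (Or.inr h)⟩
  · exact h2

/-- The coherent system of isomorphisms, indexed by finite sets. -/
noncomputable def sys (H H' : QMObj.{u} L) (u : I → H.carrier) (u' : I → H'.carrier)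
    (B0 : Set I) : Finset I → Set (H.carrier × H'.carrier) :=
  WellFounded.fix (r := fun a b : Finset I => a ⊂ b) Finset.isWellFounded_ssubset.wf
    (fun Z rec => Classical.epsilon
      (fun q => IsIso H H' u u' (B0 ∪ Z) q ∧ ∀ Z' (h : Z' ⊂ Z), rec Z' h ⊆ q))

theorem sys_eq (B0 : Set I) (Z : Finset I) : sys H H' u u' B0 Z = Classical.epsilon
      (fun q => IsIso H H' u u' (B0 ∪ Z) q ∧ ∀ Z', Z' ⊂ Z → sys H H' u u' B0 Z' ⊆ q) := by
  rw [sys, WellFounded.fix_eq]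

theorem sys_spec (hC : IsQMClass C) (hH : H ∈ C) (hH' : H' ∈ C)
    (hu : Ind H u Set.univ) (hu' : Ind H' u' Set.univ) {B0 : Set I} (hB0 : B0.Countable)
    (hB0inf : B0.Infinite) (Z : Finset I) : Disjoint B0 (Z : Set I) →
    IsIso H H' u u' (B0 ∪ Z) (sys H H' u u' B0 Z) ∧
      ∀ Z', Z' ⊂ Z → sys H H' u u' B0 Z' ⊆ sys H H' u u' B0 Z := by
  classical
  induction Z using Finset.strongInduction with
  | H Z ih =>
  intro hdisj
  have hsub : ∀ Z', Z' ⊂ Z → Disjoint B0 (Z' : Set I) := fun Z' h =>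
    hdisj.mono_right (by exact_mod_cast h.1)
  rw [sys_eq]
  refine Classical.epsilon_spec (p := fun q => IsIso H H' u u' (B0 ∪ Z) q ∧
    ∀ Z', Z' ⊂ Z → sys H H' u u' B0 Z' ⊆ q) ?_
  set S : Set I := B0 ∪ Z with hSdef
  have hS : S.Countable := hB0.union Z.countable_toSet
  have huS : Ind H u S := hu.mono hC hH (Set.subset_univ _)
  have huS' : Ind H' u' S := hu'.mono hC hH' (Set.subset_univ _)
  rcases Z.eq_empty_or_nonempty with hZe | hZne
  · obtain ⟨q, hq⟩ := iso_exists hC hH hH' hS huS huS'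
    refine ⟨q, hq, ?_⟩
    intro Z' hZ'
    rw [hZe] at hZ'
    exact absurd hZ' (Finset.not_ssubset_empty _)
  have hnot : ∀ z ∈ Z, z ∉ B0 := fun z hz h => Set.disjoint_left.1 hdisj h hz
  have hZS : (Z : Set I) ⊆ S := Set.subset_union_right
  have hinf : (S \ (Z : Set I)).Infinite :=
    hB0inf.mono fun i hi => ⟨Or.inl hi, Set.disjoint_left.1 hdisj hi⟩
  have hface : ∀ z ∈ Z, B0 ∪ ((Z.erase z : Finset I) : Set I) = S \ {z} := by
    intro z hz
    have := hnot z hz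
    ext i
    simp only [hSdef, Set.mem_union, Finset.coe_erase, Set.mem_sdiff, Set.mem_singleton_iff]
    grind
  have hg : ∀ z ∈ (Z : Set I),
      IsIso H H' u u' (S \ {z}) (sys H H' u u' B0 (Z.erase z)) := by
    intro z hz
    have hz : z ∈ Z := hz
    have hss : Z.erase z ⊂ Z := Finset.erase_ssubset hz
    rw [← hface z hz]
    exact (ih _ hss (hsub _ hss)).1
  have hag : ∀ z ∈ (Z : Set I), ∀ z' ∈ (Z : Set I), ∀ a b, (a, b) ∈ sys H H' u u' B0 (Z.erase z) →
      a ∈ H.cl (u '' (S \ {z'})) → (a, b) ∈ sys H H' u u' B0 (Z.erase z') := by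
    intro z hz z' hz' a b hab ha
    have hzm : z ∈ Z := hz
    have hzm' : z' ∈ Z := hz'
    by_cases hzz : z = z'
    · rwa [← hzz]
    have ha1 : a ∈ H.cl (u '' (S \ {z})) := by
      rw [← (hg z hz).dom]; exact mem_pdom.2 ⟨b, hab⟩
    have ha2 := span_inter hC hH huS (hZS hz') hzz ha1 ha
    have hss : Z.erase z ⊂ Z := Finset.erase_ssubset hzm
    have hss' : Z.erase z' ⊂ Z := Finset.erase_ssubset hzm'
    have hs2 : (Z.erase z).erase z' ⊂ Z.erase z :=
      Finset.erase_ssubset (Finset.mem_erase.2 ⟨fun h => hzz h.symm, hzm'⟩)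
    have hs2' : (Z.erase z).erase z' ⊂ Z.erase z' := by
      rw [Finset.erase_right_comm]
      exact Finset.erase_ssubset (Finset.mem_erase.2 ⟨hzz, hzm⟩)
    have hs3 := hs2.trans hss
    have hiso := (ih _ hs3 (hsub _ hs3)).1
    have hset : B0 ∪ (((Z.erase z).erase z' : Finset I) : Set I) = S \ {z, z'} := by
      have h1 := hnot z hzm
      have h2 := hnot z' hzm'
      ext i
      simp only [hSdef, Set.mem_union, Finset.coe_erase, Set.mem_sdiff, Set.mem_singleton_iff,
        Set.mem_insert_iff]
      grind
    rw [hset] at hiso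
    rw [← hiso.dom] at ha2
    obtain ⟨b', hb'⟩ := mem_pdom.1 ha2
    have e1 := (ih _ hss (hsub _ hss)).2 _ hs2 hb'
    have e2 := (ih _ hss' (hsub _ hss')).2 _ hs2' hb'
    rwa [pe_fun (hg z hz).pe hab e1]
  obtain ⟨q, hq, hqsub⟩ := cmap_full hC hH hH' hS huS huS' hZS hinf hZne hg
    (cmap_pe hC hH hH' Z hS huS huS' hZne _ hZS hinf hg hag)
  refine ⟨q, hq, ?_⟩
  intro Z' hZ'
  obtain ⟨z, hzZ, hzZ'⟩ := Finset.exists_of_ssubset hZ'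
  have hle : Z' ⊆ Z.erase z := fun i hi => Finset.mem_erase.2 ⟨fun h => hzZ' (h ▸ hi), hZ'.1 hi⟩
  have hss : Z.erase z ⊂ Z := Finset.erase_ssubset hzZ
  have hfin : sys H H' u u' B0 (Z.erase z) ⊆ q := fun x hx => hqsub ⟨z, hzZ, Or.inl hx⟩
  rcases hle.eq_or_ssubset with h | h
  · rw [h]; exact hfin
  · exact ((ih _ hss (hsub _ hss)).2 _ h).trans hfin

theorem iso_univ (hC : IsQMClass C) (hH : H ∈ C) (hH' : H' ∈ C) [Infinite I]
    (hu : Ind H u Set.univ) (hu' : Ind H' u' Set.univ) : ∃ q, IsIso H H' u u' Set.univ q := by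
  classical
  let B0 : Set I := Set.range (Infinite.natEmbedding I)
  have hB0 : B0.Countable := Set.countable_range _
  have hB0inf : B0.Infinite := Set.infinite_range_of_injective (Infinite.natEmbedding I).injective
  let ι := {Z : Finset I // Disjoint B0 (Z : Set I)}
  have hne : Nonempty ι := ⟨⟨∅, by simp⟩⟩
  have hmono : ∀ Z Z' : ι, Z'.1 ⊆ Z.1 → sys H H' u u' B0 Z'.1 ⊆ sys H H' u u' B0 Z.1 := by
    intro Z Z' h
    rcases h.eq_or_ssubset with h | h
    · rw [h]
    · exact (sys_spec hC hH hH' hu hu' hB0 hB0inf Z.1 Z.2).2 _ h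
  have := iso_union hC hH hH' (u := u) (u' := u') (fun Z : ι => B0 ∪ (Z.1 : Set I))
    (fun Z : ι => sys H H' u u' B0 Z.1) (by
      intro Z Z'
      let Z2 : ι := ⟨Z.1 ∪ Z'.1, by
        rw [Finset.coe_union]; exact Disjoint.union_right Z.2 Z'.2⟩
      refine ⟨Z2, ?_, ?_, hmono Z2 Z Finset.subset_union_left,
        hmono Z2 Z' Finset.subset_union_right⟩
      · exact Set.union_subset_union_right _ (by exact_mod_cast Finset.subset_union_left)
      · exact Set.union_subset_union_right _ (by exact_mod_cast Finset.subset_union_right))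
    (fun Z => (sys_spec hC hH hH' hu hu' hB0 hB0inf Z.1 Z.2).1)
  have e : (⋃ Z : ι, B0 ∪ (Z.1 : Set I)) = Set.univ := by
    refine Set.eq_univ_of_forall fun i => ?_
    by_cases hi : i ∈ B0
    · exact Set.mem_iUnion.2 ⟨Classical.arbitrary ι, Or.inl hi⟩
    · exact Set.mem_iUnion.2 ⟨⟨{i}, by simpa using hi⟩, Or.inr (by simp)⟩
  rw [e] at this
  exact ⟨_, this⟩

theorem basis_spans (hC : IsQMClass C) (hH : H ∈ C) {B : Set H.carrier} (hB : IsBasis H B) :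
    H.cl B = Set.univ := by
  have hpg := hC.pregeom H hH
  refine Set.eq_univ_of_forall fun x => ?_
  by_contra hx
  have hxB : x ∉ B := fun h => hx (hpg.subset_cl _ h)
  refine hxB ?_
  rw [← hB.2 (insert x B) (Set.subset_insert _ _) ?_]
  · exact Set.mem_insert _ _
  · intro y hy hc
    by_cases hyx : y = x
    · subst hyx
      refine hx (hpg.mono ?_ hc)
      rintro i ⟨h1, h2⟩
      exact h1.resolve_left h2
    · have hyB : y ∈ B := hy.resolve_left hyx
      have h3 : y ∈ H.cl ((B \ {y}) ∪ {x}) := by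
        refine hpg.mono ?_ hc
        rintro i ⟨h1 | h1, h2⟩
        · exact Or.inr h1
        · exact Or.inl ⟨h1, h2⟩
      refine hx (hpg.mono ?_ (hpg.exchange _ _ _ h3 (hB.1 y hyB)))
      rintro i (h | rfl)
      · exact h.1
      · exact hyB

end Amalgam

/-- If `H, H' ∈ C` are uncountable, `B`, `B'` are bases of the
pregeometries `(H, cl_H)`, `(H', cl_{H'})` and `g : B → B'` is a bijection, then `g`
extends to an isomorphism `ĝ : H → H'` of `L`-structures. -/
theorem statement_12 {L : FirstOrder.Language.{v, w}} (C : Set (QMObj.{u} L))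
    (hC : IsQMClass C) (H : QMObj.{u} L) (hH : H ∈ C) (H' : QMObj.{u} L) (hH' : H' ∈ C)
    (huncH : Uncountable H.carrier) (huncH' : Uncountable H'.carrier)
    (B : Set H.carrier) (B' : Set H'.carrier)
    (hB : IsBasis H B) (hB' : IsBasis H' B') (e : ↥B ≃ ↥B') :
    ∃ ghat : H.carrier ≃[L] H'.carrier, ∀ b : ↥B, ghat ↑b = ↑(e b) := by
  have hspan := basis_spans hC hH hB
  have hspan' := basis_spans hC hH' hB'
  have hBinf : Infinite ↥B := by
    rw [Set.infinite_coe_iff]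
    intro hfin
    have := hC.cl_finite_countable H hH B hfin
    rw [hspan, Set.countable_univ_iff] at this
    exact not_countable this
  have hu : Ind H (fun b : ↥B => (b : H.carrier)) Set.univ := by
    intro i _ hc
    refine hB.1 i i.2 ((hC.pregeom H hH).mono ?_ hc)
    rintro _ ⟨j, hj, rfl⟩
    exact ⟨j.2, fun h => hj.2 (Subtype.ext h)⟩
  have hu' : Ind H' (fun b : ↥B => ((e b : ↥B') : H'.carrier)) Set.univ := by
    intro i _ hc
    refine hB'.1 (e i) (e i).2 ((hC.pregeom H' hH').mono ?_ hc)
    rintro _ ⟨j, hj, rfl⟩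
    exact ⟨(e j).2, fun h => hj.2 (e.injective (Subtype.ext h))⟩
  obtain ⟨q, hq⟩ := iso_univ hC hH hH' hu hu'
  have e1 : (fun b : ↥B => (b : H.carrier)) '' Set.univ = B := by
    rw [Set.image_univ]; exact Subtype.range_coe
  have e2 : (fun b : ↥B => ((e b : ↥B') : H'.carrier)) '' Set.univ = B' := by
    ext x
    constructor
    · rintro ⟨b, -, rfl⟩
      exact (e b).2
    · intro hx
      exact ⟨e.symm ⟨x, hx⟩, Set.mem_univ _, by simp⟩
  obtain ⟨g, hg⟩ := equiv_of_pe hq.pe (by rw [hq.dom, e1, hspan]) (by rw [hq.img, e2, hspan'])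
  exact ⟨g, fun b => pe_fun hq.pe (hg b) (hq.base b (Set.mem_univ _))⟩

end QM
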